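/- arXiv:math/9811004 — 2 statements merged into one kernel-verified Lean document; each statement's English description precedes it below -/
import Mathlib

section
/- Let f be a positive integer and p a prime with p > f + 1. Then for every partition (λ_1, ..., λ_k) of f, the number Ψ_{n-f}^p(λ_1, ..., λ_k) is independent of n provided n ≥ f + 2λ_1; that is, for all n, n' ≥ f + 2λ_1, Ψ_{n-f}^p(λ_1, ..., λ_k) = Ψ_{n'-f}^p(λ_1, ..., λ_k). -/
/-- `℧_1(H) = ⟨h^p : h ∈ H⟩` for a subgroup `H`. -/
def MhoOne (p : ℕ) {P : Type} [Group P] (H : Subgroup P) : Subgroup P :=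
  Subgroup.closure {y : P | ∃ x ∈ H, y = x ^ p}

/-- A `p`-group `P` is regular if for all `x y : P` there is
`z ∈ ℧_1(γ_2(⟨x,y⟩))` with `x^p * y^p = (x*y)^p * z`. -/
def IsRegularPGroup (p : ℕ) (P : Type) [Group P] : Prop :=
  ∀ x y : P,
    ∃ z ∈ MhoOne p ⁅Subgroup.closure {x, y}, Subgroup.closure {x, y}⁆,
      x ^ p * y ^ p = (x * y) ^ p * z

/-- `Ω_i(P) = ⟨x : x^(p^i) = 1⟩`. -/
def OmegaSubgroup (p : ℕ) (P : Type) [Group P] (i : ℕ) : Subgroup P :=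
  Subgroup.closure {x : P | x ^ p ^ i = 1}

/-- `ω_i(P)`, defined by `p ^ ω_i(P) = |Ω_i(P)/Ω_{i-1}(P)|`. -/
noncomputable def omegaInv (p : ℕ) (P : Type) [Group P] (i : ℕ) : ℕ :=
  ((OmegaSubgroup p P (i - 1)).relIndex (OmegaSubgroup p P i)).factorization p

/-- `μ_j(P)` (for `j ≥ 1`): the dual partition of `(ω_1(P), ω_2(P), ...)`;
the type invariants of `P` are `μ_1(P) ≥ μ_2(P) ≥ ...`. -/
noncomputable def muInv (p : ℕ) (P : Type) [Group P] (j : ℕ) : ℕ :=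
  Nat.card {i : ℕ // 1 ≤ i ∧ j ≤ omegaInv p P i}

/-- `P` has type invariants given by the list `l`. -/
def HasTypeInvariants (p : ℕ) (P : Type) [Group P] (l : List ℕ) : Prop :=
  ∀ i : ℕ, muInv p P (i + 1) = l.getD i 0

/-- The multiplication extracted from a group structure. -/
def mulOfGroup (G : Type) (s : Group G) : Mul G := by letI := s; infer_instance

/-- The number of isomorphism classes of groups of order `N` whose group structure
satisfies the predicate `Q`. -/
noncomputable def groupClassCount (N : ℕ) (Q : Group (Fin N) → Prop) : ℕ :=
  Nat.card (Quot fun s t : {s : Group (Fin N) // Q s} =>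
    Nonempty (@MulEquiv (Fin N) (Fin N) (mulOfGroup _ s.1) (mulOfGroup _ t.1)))

/-- `Ψ_e^p(λ)`: the number of isomorphism classes of regular `p`-groups of type
`(e, λ_1, ..., λ_k)`; such a group has order `p ^ (e + λ_1 + ... + λ_k)`. -/
noncomputable def PsiType (p e : ℕ) (l : List ℕ) : ℕ :=
  groupClassCount (p ^ (e + l.sum)) fun s =>
    letI := s
    IsRegularPGroup p (Fin (p ^ (e + l.sum))) ∧
      HasTypeInvariants p (Fin (p ^ (e + l.sum))) (e :: l)

/-! Let `G` be a regular `p`-group of type `(e, λ₁, ...)` with `e = m + λ₁` and `m ≥ λ₁`. The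
subgroup `N = Ω_{λ₁}(G)` has exponent `p ^ λ₁`, and `G / N` is cyclic of order `p ^ m`, generated by
the image of an element `x` of order `p ^ e`. Hence `G` is determined by `N`, the action `σ` of `x`
on `N`, the element `w = x ^ p ^ m` of `N`, and `m`. Such a triple `(N, σ, w)` comes from an
extension as soon as `σ w = w` and `σ ^ p ^ m` is conjugation by `w`. By Hall's power law
(`x ^ p ^ i = y ^ p ^ i` if and only if `(x⁻¹ * y) ^ p ^ i = 1`), `x ^ p ^ λ₁` is central, so
`σ ^ p ^ λ₁ = 1`: the conditions are independent of `m ≥ λ₁`, and the same triple defines a group of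
type `(m' + λ₁, λ₁, ...)` for every `m' ≥ λ₁`. Two triples with isomorphic extensions differ by an
isomorphism of kernels and a change `x ↦ t x ^ u` of generator. Since `N` has exponent dividing
`p ^ m`, `(t x ^ u) ^ p ^ m = w ^ u`, so this equivalence of triples is independent of `m` as well.
Replacing `m` by `m'` is therefore a bijection on isomorphism classes. -/

/-! ### Regular `p`-groups and Hall's power law -/

section MhoOne

variable {p : ℕ} {P Q : Type} [Group P] [Group Q]

theorem map_mhoOne (f : P →* Q) (H : Subgroup P) :
    (MhoOne p H).map f = MhoOne p (H.map f) := by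
  unfold MhoOne
  rw [MonoidHom.map_closure]
  congr 1
  ext y
  constructor
  · rintro ⟨_, ⟨x, hx, rfl⟩, rfl⟩
    exact ⟨f x, ⟨x, hx, rfl⟩, map_pow f x p⟩
  · rintro ⟨_, ⟨x, hx, rfl⟩, rfl⟩
    exact ⟨x ^ p, ⟨x, hx, rfl⟩, map_pow f x p⟩

theorem map_mhoOne_commutator_closure_pair (f : P →* Q) (x y : P) :
    (MhoOne p ⁅Subgroup.closure {x, y}, Subgroup.closure {x, y}⁆).map f =
      MhoOne p ⁅Subgroup.closure {f x, f y}, Subgroup.closure {f x, f y}⁆ := by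
  rw [map_mhoOne, Subgroup.map_commutator, MonoidHom.map_closure, Set.image_pair]

theorem mhoOne_le (H : Subgroup P) : MhoOne p H ≤ H := by
  rw [MhoOne, Subgroup.closure_le]
  rintro _ ⟨x, hx, rfl⟩
  exact H.pow_mem hx p

end MhoOne

namespace IsRegularPGroup

variable {p : ℕ} {P Q : Type} [Group P] [Group Q]

theorem of_surjective (h : IsRegularPGroup p P) (f : P →* Q) (hf : Function.Surjective f) :
    IsRegularPGroup p Q := by
  intro x y
  obtain ⟨x, rfl⟩ := hf x
  obtain ⟨y, rfl⟩ := hf y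
  obtain ⟨z, hz, hxy⟩ := h x y
  refine ⟨f z, ?_, by simp only [← map_pow, ← map_mul, hxy]⟩
  rw [← map_mhoOne_commutator_closure_pair]
  exact Subgroup.mem_map_of_mem f hz

theorem of_injective (h : IsRegularPGroup p Q) (f : P →* Q) (hf : Function.Injective f) :
    IsRegularPGroup p P := by
  intro x y
  obtain ⟨z, hz, hxy⟩ := h (f x) (f y)
  rw [← map_mhoOne_commutator_closure_pair] at hz
  obtain ⟨z, hz, rfl⟩ := hz
  exact ⟨z, hz, hf (by simpa using hxy)⟩

theorem prod {A : Type} [CommGroup A] (h : IsRegularPGroup p P) : IsRegularPGroup p (P × A) := by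
  intro x y
  obtain ⟨z, hz, hxy⟩ := h (MonoidHom.fst P A x) (MonoidHom.fst P A y)
  rw [← map_mhoOne_commutator_closure_pair] at hz
  obtain ⟨z, hz, rfl⟩ := hz
  have hz₂ : z.2 = 1 :=
    Abelianization.commutator_subset_ker (MonoidHom.snd P A)
      (Subgroup.commutator_mono le_top le_top (mhoOne_le _ hz))
  exact ⟨z, hz, Prod.ext hxy (by simp [hz₂, mul_pow])⟩

end IsRegularPGroup

/-- Hall's power law for the exponent `n`: two elements have the same `n`-th power exactly when
they differ by an element of exponent dividing `n`. In a regular `p`-group it holds for every power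
of `p`. -/
def HasHallPowerLaw (n : ℕ) (G : Type*) [Group G] : Prop :=
  ∀ x y : G, x ^ n = y ^ n ↔ (x⁻¹ * y) ^ n = 1

namespace HasHallPowerLaw

variable {G : Type*} [Group G] {m n : ℕ}

theorem one (G : Type*) [Group G] : HasHallPowerLaw 1 G := fun x y ↦ by
  simp [inv_mul_eq_one]

theorem mul_pow_of_pow_eq_one (h : HasHallPowerLaw n G) (x : G) {y : G} (hy : y ^ n = 1) :
    (x * y) ^ n = x ^ n :=
  ((h x (x * y)).2 (by simpa using hy)).symm

/-- The subgroup of elements of exponent dividing `n`. -/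
def torsion (h : HasHallPowerLaw n G) : Subgroup G where
  carrier := {g | g ^ n = 1}
  one_mem' := one_pow n
  mul_mem' {x _} hx hy := (h.mul_pow_of_pow_eq_one x hy).trans hx
  inv_mem' {x} (hx : x ^ n = 1) := show x⁻¹ ^ n = 1 by rw [inv_pow, hx, inv_one]

theorem mem_torsion (h : HasHallPowerLaw n G) {g : G} : g ∈ h.torsion ↔ g ^ n = 1 :=
  Iff.rfl

instance torsion_characteristic (h : HasHallPowerLaw n G) : h.torsion.Characteristic where
  fixed φ := by
    ext g
    simp [mem_torsion, ← map_pow]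

theorem mul (hm : HasHallPowerLaw m G) (hn : HasHallPowerLaw n (G ⧸ hm.torsion)) :
    HasHallPowerLaw (m * n) G := by
  intro x y
  have hquot := hn x y
  rw [← QuotientGroup.mk_pow, ← QuotientGroup.mk_pow, QuotientGroup.eq, ← QuotientGroup.mk_inv,
    ← QuotientGroup.mk_mul, ← QuotientGroup.mk_pow, QuotientGroup.eq_one_iff, mem_torsion,
    mem_torsion, ← hm, ← pow_mul, ← pow_mul, ← pow_mul, mul_comm n] at hquot
  exact hquot

end HasHallPowerLaw

open scoped commutatorElement in
theorem commutator_le_of_closure_pair_eq_top {G : Type*} [Group G] {u v : G}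
    (huv : Subgroup.closure {u, v} = ⊤) (T : Subgroup G) [T.Normal] (h : ⁅u, v⁆ ∈ T) :
    commutator G ≤ T := by
  have hcomm : Commute (u : G ⧸ T) v := by
    rwa [← commutatorElement_eq_one_iff_commute, ← QuotientGroup.mk'_apply,
      ← QuotientGroup.mk'_apply, ← map_commutatorElement, QuotientGroup.mk'_apply,
      QuotientGroup.eq_one_iff]
  have hgen : Subgroup.closure {(u : G ⧸ T), (v : G ⧸ T)} = ⊤ := by
    have := congrArg (Subgroup.map (QuotientGroup.mk' T)) huv
    rwa [MonoidHom.map_closure, Set.image_pair, ← MonoidHom.range_eq_map,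
      QuotientGroup.range_mk'] at this
  rw [← Subgroup.Normal.quotient_commutative_iff_commutator_le]
  have := Subgroup.isMulCommutative_closure (k := {(u : G ⧸ T), (v : G ⧸ T)}) (by
    rintro x (rfl | rfl) y (rfl | rfl)
    exacts [rfl, hcomm, hcomm.symm, rfl])
  rw [hgen] at this
  exact ⟨⟨fun x y ↦ congrArg Subtype.val
    (mul_comm' (⟨x, Subgroup.mem_top x⟩ : (⊤ : Subgroup (G ⧸ T))) ⟨y, Subgroup.mem_top y⟩)⟩⟩

namespace IsRegularPGroup

variable {p : ℕ} {G : Type} [Group G] [Finite G]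

open scoped commutatorElement in
-- A maximal subgroup containing `u` is normal, and its elements of exponent `p` form a normal
-- subgroup of `G` that contains `⁅u, v⁆`, hence all commutators: the correction term in the
-- definition of regularity vanishes.
theorem mul_pow_of_closure_pair_eq_top [Fact p.Prime] (hP : IsPGroup p G)
    (hR : IsRegularPGroup p G) (hsub : ∀ H : Subgroup G, H ≠ ⊤ → HasHallPowerLaw p H) {u v : G}
    (huv : Subgroup.closure {u, v} = ⊤) (hu : u ^ p ∈ Subgroup.center G) (x y : G) :
    (x * y) ^ p = x ^ p * y ^ p := by
  rcases IsCoatomic.eq_top_or_exists_le_coatom (Subgroup.zpowers u) with htop | ⟨M, hM, huM⟩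
  · obtain ⟨i, rfl⟩ : x ∈ Subgroup.zpowers u := htop ▸ Subgroup.mem_top x
    obtain ⟨j, rfl⟩ : y ∈ Subgroup.zpowers u := htop ▸ Subgroup.mem_top y
    exact (Commute.zpow_zpow_self u i j).mul_pow p
  have := hP.isNilpotent
  have hMn : M.Normal :=
    Subgroup.NormalizerCondition.normal_of_coatom M Group.normalizerCondition_of_isNilpotent hM
  have hlaw := hsub M hM.1
  have huM' : u⁻¹ ∈ M := M.inv_mem (huM (Subgroup.mem_zpowers u))
  have hcomm : ⁅u, v⁆ ∈ hlaw.torsion.map M.subtype := by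
    let t : M := ⟨u⁻¹, huM'⟩
    let s : M := ⟨v * u⁻¹ * v⁻¹, hMn.conj_mem _ huM' v⟩
    have hpow : t ^ p = s ^ p := by
      have := Subgroup.mem_center_iff.1 (inv_mem hu) v
      exact Subtype.ext (by simp [t, s, conj_pow, this])
    exact ⟨t⁻¹ * s, (hlaw t s).1 hpow, by simp [t, s, commutatorElement_def, mul_assoc]⟩
  have hle := commutator_le_of_closure_pair_eq_top huv _ hcomm
  obtain ⟨z, hz, hxy⟩ := hR x y
  suffices z = 1 by rw [hxy, this, mul_one]
  have hz' : MhoOne p ⁅Subgroup.closure {x, y}, Subgroup.closure {x, y}⁆ ≤ ⊥ := by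
    rw [MhoOne, Subgroup.closure_le]
    rintro _ ⟨d, hd, rfl⟩
    obtain ⟨t, ht, rfl⟩ := hle (Subgroup.commutator_mono le_top le_top hd)
    exact congrArg Subtype.val ht
  exact hz' hz

theorem hasHallPowerLaw_of_subgroups [Fact p.Prime] (hP : IsPGroup p G)
    (hR : IsRegularPGroup p G) (hsub : ∀ H : Subgroup G, H ≠ ⊤ → HasHallPowerLaw p H) :
    HasHallPowerLaw p G := by
  intro x y
  by_cases hxy : Subgroup.closure {x, y} = ⊤
  · constructor
    · intro h
      have hcen : x ^ p ∈ Subgroup.center G := by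
        rw [← Subgroup.centralizer_univ, ← Subgroup.coe_top, ← hxy, Subgroup.centralizer_closure,
          Subgroup.mem_centralizer_iff]
        rintro z (rfl | rfl)
        · exact (Commute.refl z).pow_right p
        · exact h ▸ (Commute.refl z).pow_right p
      rw [hR.mul_pow_of_closure_pair_eq_top hP hsub hxy hcen, ← h, inv_pow, inv_mul_cancel]
    · intro h
      have hgen : Subgroup.closure {x⁻¹ * y, x} = ⊤ := by
        rw [eq_top_iff, ← hxy, Subgroup.closure_le, Set.pair_subset_iff]
        have hx : x ∈ Subgroup.closure {x⁻¹ * y, x} := Subgroup.subset_closure (by simp)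
        exact ⟨hx, by
          simpa using mul_mem hx (Subgroup.subset_closure (by simp) : x⁻¹ * y ∈ _)⟩
      have := hR.mul_pow_of_closure_pair_eq_top hP hsub hgen (h ▸ one_mem _) x (x⁻¹ * y)
      rw [h, mul_one, mul_inv_cancel_left] at this
      exact this.symm
  · simpa [Subtype.ext_iff] using hsub _ hxy ⟨x, Subgroup.subset_closure (by simp)⟩
      ⟨y, Subgroup.subset_closure (by simp)⟩

theorem hasHallPowerLaw_prime [Fact p.Prime] (hP : IsPGroup p G) (hR : IsRegularPGroup p G) :
    HasHallPowerLaw p G := by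
  induction h : Nat.card G using Nat.strong_induction_on generalizing G with
  | _ n ih =>
    refine hR.hasHallPowerLaw_of_subgroups hP fun H hH ↦ ih _ ?_ (hP.to_subgroup H)
      (hR.of_injective H.subtype H.subtype_injective) rfl
    rw [← h]
    exact (Subgroup.card_le_card_group H).lt_of_ne fun h ↦ hH (Subgroup.eq_top_of_card_eq H h)

theorem hasHallPowerLaw [Fact p.Prime] (hP : IsPGroup p G) (hR : IsRegularPGroup p G) (i : ℕ) :
    HasHallPowerLaw (p ^ i) G := by
  induction i generalizing G with
  | zero => simpa using HasHallPowerLaw.one G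
  | succ i ih =>
    have hlaw := hR.hasHallPowerLaw_prime hP
    rw [pow_succ']
    exact hlaw.mul (ih (hP.to_quotient _)
      (hR.of_surjective (QuotientGroup.mk' hlaw.torsion) (QuotientGroup.mk'_surjective _)))

end IsRegularPGroup

/-! ### The subgroups `Ω_i` and the type invariants -/

theorem pow_pow_eq_one_of_le {G : Type*} [Monoid G] {p r s : ℕ} (hrs : r ≤ s) {x : G}
    (hx : x ^ p ^ r = 1) : x ^ p ^ s = 1 := by
  rw [← orderOf_dvd_iff_pow_eq_one] at hx ⊢
  exact hx.trans (pow_dvd_pow p hrs)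

section Omega

variable {p : ℕ} {G : Type} [Group G]

theorem omegaSubgroup_mono : Monotone (OmegaSubgroup p G) := fun _ _ hrs ↦
  Subgroup.closure_mono fun _ hx ↦ pow_pow_eq_one_of_le hrs hx

theorem HasHallPowerLaw.omegaSubgroup_eq_torsion {r : ℕ} (h : HasHallPowerLaw (p ^ r) G) :
    OmegaSubgroup p G r = h.torsion :=
  Subgroup.closure_eq h.torsion

theorem HasHallPowerLaw.mem_omegaSubgroup {r : ℕ} (h : HasHallPowerLaw (p ^ r) G) {g : G} :
    g ∈ OmegaSubgroup p G r ↔ g ^ p ^ r = 1 := by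
  rw [h.omegaSubgroup_eq_torsion, h.mem_torsion]

theorem omegaSubgroup_eq_top {r : ℕ} (h : ∀ g : G, g ^ p ^ r = 1) : OmegaSubgroup p G r = ⊤ :=
  (Subgroup.eq_top_iff' _).2 fun g ↦ Subgroup.subset_closure (h g)

theorem orderOf_mk_omegaSubgroup {l m : ℕ} (hp : 0 < p) (hG : HasHallPowerLaw (p ^ l) G)
    [(OmegaSubgroup p G l).Normal] {x : G} (hx : orderOf x = p ^ (l + m)) :
    orderOf (x : G ⧸ OmegaSubgroup p G l) = p ^ m := by
  refine Nat.dvd_right_iff_eq.1 fun k ↦ ?_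
  rw [orderOf_dvd_iff_pow_eq_one, ← QuotientGroup.mk_pow, QuotientGroup.eq_one_iff,
    hG.mem_omegaSubgroup, ← pow_mul, mul_comm, ← orderOf_dvd_iff_pow_eq_one, hx, pow_add,
    Nat.mul_dvd_mul_iff_left (pow_pos hp l)]

theorem omegaInv_eq_zero {r : ℕ} (h : ∀ g : G, g ^ p ^ (r - 1) = 1) : omegaInv p G r = 0 := by
  rw [omegaInv, omegaSubgroup_eq_top h, Subgroup.relIndex_top_left, Nat.factorization_one]
  rfl

theorem muInv_eq_ncard (p : ℕ) (G : Type) [Group G] (j : ℕ) :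
    muInv p G j = {i : ℕ | 1 ≤ i ∧ j ≤ omegaInv p G i}.ncard :=
  rfl

variable [Fact p.Prime] [Finite G]

theorem relIndex_omegaSubgroup (hP : IsPGroup p G) (r : ℕ) :
    (OmegaSubgroup p G (r - 1)).relIndex (OmegaSubgroup p G r) = p ^ omegaInv p G r := by
  obtain ⟨n, hn⟩ := (hP.to_subgroup (OmegaSubgroup p G r)).index
    ((OmegaSubgroup p G (r - 1)).subgroupOf (OmegaSubgroup p G r))
  rw [omegaInv, show Subgroup.relIndex _ _ = p ^ n from hn, Nat.Prime.factorization_pow Fact.out,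
    Finsupp.single_eq_same]

-- `x ↦ x ^ p` induces an injection of `Ω_{r+2} / Ω_{r+1}` into `Ω_{r+1} / Ω_r`.
theorem omegaInv_succ_le (hP : IsPGroup p G) (hG : ∀ i, HasHallPowerLaw (p ^ i) G) (r : ℕ) :
    omegaInv p G (r + 2) ≤ omegaInv p G (r + 1) := by
  have hp : p.Prime := Fact.out
  rw [← Nat.pow_le_pow_iff_right hp.one_lt, ← relIndex_omegaSubgroup hP,
    ← relIndex_omegaSubgroup hP]
  have hpow (s : ℕ) (x y : G) : (x ^ p)⁻¹ * y ^ p ∈ OmegaSubgroup p G s ↔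
      x⁻¹ * y ∈ OmegaSubgroup p G (s + 1) := by
    rw [(hG _).mem_omegaSubgroup, (hG _).mem_omegaSubgroup, ← hG, ← hG, pow_succ', pow_mul,
      pow_mul]
  have hmem (x : OmegaSubgroup p G (r + 2)) : (x : G) ^ p ∈ OmegaSubgroup p G (r + 1) := by
    simpa using (hpow (r + 1) 1 x).2 (by simp)
  refine Nat.card_le_card_of_injective
    (Quotient.map' (fun x ↦ ⟨(x : G) ^ p, hmem x⟩) fun x y hxy ↦ ?_) ?_
  · rw [QuotientGroup.leftRel_apply] at hxy ⊢
    exact (hpow r x y).2 hxy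
  · intro x y
    induction x, y using Quotient.inductionOn₂' with | _ x y
    intro hxy
    rw [Quotient.map'_mk'', Quotient.map'_mk'', Quotient.eq'', QuotientGroup.leftRel_apply] at hxy
    rw [Quotient.eq'', QuotientGroup.leftRel_apply]
    exact (hpow r x y).1 hxy

theorem omegaInv_le_of_le (hP : IsPGroup p G) (hG : ∀ i, HasHallPowerLaw (p ^ i) G) {r s : ℕ}
    (hr : 1 ≤ r) (hrs : r ≤ s) : omegaInv p G s ≤ omegaInv p G r := by
  obtain ⟨r, rfl⟩ := Nat.exists_eq_add_of_le' hr
  induction s, hrs using Nat.le_induction with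
  | base => rfl
  | succ s hs ih =>
    obtain ⟨s, rfl⟩ := Nat.exists_eq_add_of_le' (hr.trans hs)
    exact (omegaInv_succ_le hP hG s).trans ih

theorem le_omegaInv_iff_le_muInv (hP : IsPGroup p G) (hG : ∀ i, HasHallPowerLaw (p ^ i) G)
    {j r : ℕ} (hj : muInv p G j ≠ 0) (hr : 1 ≤ r) : j ≤ omegaInv p G r ↔ r ≤ muInv p G j := by
  rw [muInv_eq_ncard] at hj ⊢
  set S : Set ℕ := {i | 1 ≤ i ∧ j ≤ omegaInv p G i}
  have hdown {a b : ℕ} (ha : 1 ≤ a) (hab : a ≤ b) (hb : j ≤ omegaInv p G b) : a ∈ S :=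
    ⟨ha, hb.trans (omegaInv_le_of_le hP hG ha hab)⟩
  have hfin : S.Finite := Set.finite_of_ncard_ne_zero hj
  constructor
  · intro h
    have hsub : Set.Icc 1 r ⊆ S := fun i hi ↦ hdown hi.1 hi.2 h
    simpa using Set.ncard_le_ncard hsub hfin
  · intro h
    by_contra hjr
    have hsub : S ⊆ Set.Ico 1 r := fun i hi ↦
      ⟨hi.1, not_le.1 fun hri ↦ hjr (hdown hr hri hi.2).2⟩
    have := Set.ncard_le_ncard hsub (Set.finite_Ico 1 r)
    rw [Set.ncard_Ico_nat] at this
    omega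

theorem relIndex_omegaSubgroup_of_le (hP : IsPGroup p G) {r s : ℕ} (hrs : r ≤ s) :
    (OmegaSubgroup p G r).relIndex (OmegaSubgroup p G s) =
      p ^ ∑ i ∈ Finset.Ioc r s, omegaInv p G i := by
  induction s, hrs using Nat.le_induction with
  | base => simp
  | succ s hrs ih =>
    have hstep := relIndex_omegaSubgroup hP (s + 1)
    rw [Nat.add_sub_cancel] at hstep
    rw [← Subgroup.relIndex_mul_relIndex _ _ _ (omegaSubgroup_mono hrs)
      (omegaSubgroup_mono s.le_succ), ih, hstep, ← pow_add, Finset.sum_Ioc_succ_top hrs]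

namespace HasTypeInvariants

variable {e l : ℕ} {rest : List ℕ}

theorem omegaInv_eq_ite (hT : HasTypeInvariants p G (e :: l :: rest)) (hP : IsPGroup p G)
    (hG : ∀ i, HasHallPowerLaw (p ^ i) G) (hl : 0 < l) (hle : l < e) {r : ℕ} (hr : l < r) :
    omegaInv p G r = if r ≤ e then 1 else 0 := by
  have he : muInv p G 1 = e := hT 0
  have hl' : muInv p G 2 = l := hT 1
  have h1 := le_omegaInv_iff_le_muInv hP hG (j := 1) (r := r) (by omega) (by omega)
  have h2 := le_omegaInv_iff_le_muInv hP hG (j := 2) (r := r) (by omega) (by omega)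
  split_ifs <;> omega

theorem index_omegaSubgroup (hT : HasTypeInvariants p G (e :: l :: rest)) (hP : IsPGroup p G)
    (hG : ∀ i, HasHallPowerLaw (p ^ i) G) (hl : 0 < l) (hle : l < e) :
    (OmegaSubgroup p G l).index = p ^ (e - l) := by
  obtain ⟨R, hR⟩ := IsPGroup.iff_card.1 hP
  have htop : OmegaSubgroup p G (e + R) = ⊤ := omegaSubgroup_eq_top fun g ↦
    pow_pow_eq_one_of_le (Nat.le_add_left R e) (hR ▸ pow_card_eq_one')
  have hfilter : (Finset.Ioc l (e + R)).filter (· ≤ e) = Finset.Ioc l e := by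
    ext i
    simp only [Finset.mem_filter, Finset.mem_Ioc]
    omega
  rw [← Subgroup.relIndex_top_right, ← htop, relIndex_omegaSubgroup_of_le hP (by omega),
    Finset.sum_congr rfl fun r hr ↦ hT.omegaInv_eq_ite hP hG hl hle (Finset.mem_Ioc.1 hr).1,
    Finset.sum_boole, hfilter, Nat.card_Ioc, Nat.cast_id]

theorem exists_orderOf_eq (hT : HasTypeInvariants p G (e :: l :: rest)) (hP : IsPGroup p G)
    (hG : ∀ i, HasHallPowerLaw (p ^ i) G) (hl : 0 < l) (hle : l < e) :
    ∃ x : G, orderOf x = p ^ e := by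
  have hp : p.Prime := Fact.out
  have hlt : ¬ OmegaSubgroup p G e ≤ OmegaSubgroup p G (e - 1) := by
    rw [← Subgroup.relIndex_eq_one, relIndex_omegaSubgroup hP, hT.omegaInv_eq_ite hP hG hl hle hle,
      if_pos le_rfl, pow_one]
    exact hp.ne_one
  obtain ⟨x, hx, hx'⟩ := SetLike.not_le_iff_exists.1 hlt
  rw [(hG _).mem_omegaSubgroup] at hx hx'
  obtain ⟨e, rfl⟩ := Nat.exists_eq_add_of_lt hle
  exact ⟨x, orderOf_eq_prime_pow hx' hx⟩

end HasTypeInvariants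

end Omega

/-! ### Cyclic extensions -/

/-- An extension `G` of the cyclic group `ℤ/q` by `N`, together with an element `gen` of `G` lying
over the generator of `ℤ/q` that acts on `N` by `σ` and whose `q`-th power is `w`. The triple
`(σ, w, q)` determines `G` up to isomorphism. -/
structure CyclicExtension {N : Type*} [Group N] (σ : MulAut N) (w : N) (q : ℕ) (G : Type*)
    [Group G] extends GroupExtension N G (Multiplicative (ZMod q)) where
  gen : G
  rightHom_gen : rightHom gen = Multiplicative.ofAdd 1
  gen_conj_inl : ∀ n, gen * inl n * gen⁻¹ = inl (σ n)
  gen_pow : gen ^ q = inl w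

namespace CyclicExtension

open Multiplicative

universe u

section Basic

variable {N G : Type*} [Group N] [Group G] {σ : MulAut N} {w : N} {q : ℕ}
  (E : CyclicExtension σ w q G)

include E

theorem mem_range_inl_iff {g : G} : g ∈ E.inl.range ↔ E.rightHom g = 1 := by
  rw [E.range_inl_eq_ker_rightHom, MonoidHom.mem_ker]

theorem rightHom_gen_zpow (j : ℤ) : E.rightHom (E.gen ^ j) = ofAdd (j : ZMod q) := by
  rw [map_zpow, E.rightHom_gen, ← ofAdd_zsmul, zsmul_one]

theorem gen_zpow_mem_range_inl_iff {j : ℤ} : E.gen ^ j ∈ E.inl.range ↔ (q : ℤ) ∣ j := by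
  rw [mem_range_inl_iff, rightHom_gen_zpow, ofAdd_eq_one, ZMod.intCast_zmod_eq_zero_iff_dvd]

theorem exists_eq_inl_mul_gen_zpow (g : G) : ∃ (n : N) (j : ℤ), g = E.inl n * E.gen ^ j := by
  obtain ⟨j, hj⟩ := ZMod.intCast_surjective (toAdd (E.rightHom g))
  obtain ⟨n, hn⟩ : g * (E.gen ^ j)⁻¹ ∈ E.inl.range := by
    rw [mem_range_inl_iff, map_mul, map_inv, rightHom_gen_zpow, hj, ofAdd_toAdd, mul_inv_cancel]
  exact ⟨n, j, by rw [hn, inv_mul_cancel_right]⟩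

theorem conjAct_gen : E.toGroupExtension.conjAct E.gen = σ := by
  ext n
  apply E.inl_injective
  rw [E.toGroupExtension.inl_conjAct_comm, E.gen_conj_inl]

theorem gen_zpow_conj_inl (j : ℤ) (n : N) :
    E.gen ^ j * E.inl n * (E.gen ^ j)⁻¹ = E.inl ((σ ^ j) n) := by
  rw [← E.toGroupExtension.inl_conjAct_comm, map_zpow, conjAct_gen]

theorem map_self_eq : σ w = w := by
  apply E.inl_injective
  rw [← E.gen_conj_inl, ← E.gen_pow, (Commute.self_pow E.gen q).eq, mul_inv_cancel_right]

theorem pow_eq_conj : σ ^ q = MulAut.conj w := by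
  ext n
  apply E.inl_injective
  rw [← zpow_natCast, ← gen_zpow_conj_inl, zpow_natCast, E.gen_pow, MulAut.conj_apply, map_mul,
    map_mul, map_inv]

theorem card_eq : Nat.card G = q * Nat.card N := by
  rw [← E.inl.range.card_mul_index, E.range_inl_eq_ker_rightHom, Subgroup.index_ker,
    MonoidHom.range_eq_top.2 E.rightHom_surjective, Subgroup.card_top,
    ← E.range_inl_eq_ker_rightHom, mul_comm, Nat.card_congr toAdd, Nat.card_zmod,
    Nat.card_congr (MonoidHom.ofInjective E.inl_injective).symm.toEquiv]

/-- Transport of a cyclic extension along an isomorphism of the middle groups. -/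
def ofMulEquiv {H : Type*} [Group H] (e : G ≃* H) : CyclicExtension σ w q H where
  inl := e.toMonoidHom.comp E.inl
  rightHom := E.rightHom.comp e.symm.toMonoidHom
  inl_injective := e.injective.comp E.inl_injective
  range_inl_eq_ker_rightHom := by
    ext h
    simp [MonoidHom.mem_ker, ← E.mem_range_inl_iff, ← e.eq_symm_apply]
  rightHom_surjective := E.rightHom_surjective.comp e.symm.surjective
  gen := e E.gen
  rightHom_gen := by simp [E.rightHom_gen]
  gen_conj_inl n := by simp [← E.gen_conj_inl]
  gen_pow := by simp [← E.gen_pow]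

/-- Change of the kernel and of the distinguished generator of a cyclic extension; the projection
onto `ℤ/q` is rescaled so that the new generator lies over `1`. -/
noncomputable def reparametrize {M : Type*} [Group M] (f : M ≃* N) (g : G)
    (hg : IsUnit (toAdd (E.rightHom g))) {τ : MulAut M} {v : M}
    (hconj : ∀ x, g * E.inl (f x) * g⁻¹ = E.inl (f (τ x))) (hpow : g ^ q = E.inl (f v)) :
    CyclicExtension τ v q G where
  inl := E.inl.comp f.toMonoidHom
  rightHom := ((DistribMulAction.toAddEquiv (ZMod q) hg.unit⁻¹).toMultiplicative :
    Multiplicative (ZMod q) →* Multiplicative (ZMod q)).comp E.rightHom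
  inl_injective := E.inl_injective.comp f.injective
  range_inl_eq_ker_rightHom := by
    rw [MonoidHom.ker_mulEquiv_comp, MonoidHom.range_comp, MonoidHom.range_eq_top.2 f.surjective,
      ← MonoidHom.range_eq_map, E.range_inl_eq_ker_rightHom]
  rightHom_surjective := by
    rw [MonoidHom.coe_comp]
    exact (MulEquiv.surjective _).comp E.rightHom_surjective
  gen := g
  rightHom_gen := by
    have : (↑hg.unit⁻¹ : ZMod q) * toAdd (E.rightHom g) = 1 := hg.val_inv_mul
    exact congrArg ofAdd this
  gen_conj_inl := hconj
  gen_pow := hpow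

end Basic

section Cover

variable {N : Type u} {G : Type*} [Group N] [Group G] {σ : MulAut N} {w : N} {q : ℕ}

/-- The universal group generated by `N` and an element acting on it by `σ`, of which every cyclic
extension with action `σ` is a quotient. -/
abbrev Cover (σ : MulAut N) : Type _ := N ⋊[zpowersHom (MulAut N) σ] Multiplicative ℤ

/-- The element of the universal group which imposes the relation `gen ^ q = inl w`. -/
def relator (σ : MulAut N) (w : N) (q : ℕ) : Cover σ :=
  ⟨w⁻¹, ofAdd (q : ℤ)⟩

theorem relator_zpow_right (t : ℤ) : (relator σ w q ^ t).right = ofAdd (q * t : ℤ) := by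
  rw [mul_comm, ← smul_eq_mul, ofAdd_zsmul]
  exact map_zpow SemidirectProduct.rightHom _ t

/-- The projection of the universal group onto a cyclic extension. -/
def cover (E : CyclicExtension σ w q G) : Cover σ →* G :=
  SemidirectProduct.lift E.inl (zpowersHom G E.gen) fun j ↦ by
    ext n
    simp [-map_zpow, gen_zpow_conj_inl]

variable (E : CyclicExtension σ w q G)

theorem cover_apply (x : Cover σ) : E.cover x = E.inl x.left * E.gen ^ toAdd x.right := rfl

theorem cover_surjective : Function.Surjective E.cover := fun g ↦ by
  obtain ⟨n, j, rfl⟩ := E.exists_eq_inl_mul_gen_zpow g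
  exact ⟨⟨n, ofAdd j⟩, rfl⟩

theorem cover_prod_rightHom_injective :
    Function.Injective (E.cover.prod SemidirectProduct.rightHom) := by
  rintro ⟨n, j⟩ ⟨n', j'⟩ h
  simp only [MonoidHom.prod_apply, cover_apply, SemidirectProduct.rightHom_eq_right,
    Prod.mk.injEq] at h
  obtain ⟨h, rfl⟩ := h
  rw [mul_left_inj, E.inl_injective.eq_iff] at h
  rw [h]

theorem ker_cover : E.cover.ker = Subgroup.zpowers (relator σ w q) := by
  have hrel : relator σ w q ∈ E.cover.ker := by
    rw [MonoidHom.mem_ker, cover_apply]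
    simp [relator, E.gen_pow]
  refine le_antisymm (fun x hx ↦ ?_) (by simpa using hrel)
  obtain ⟨t, ht⟩ : (q : ℤ) ∣ toAdd x.right := by
    rw [← E.gen_zpow_mem_range_inl_iff]
    refine ⟨x.left⁻¹, ?_⟩
    rw [map_inv]
    exact inv_eq_of_mul_eq_one_right hx
  refine ⟨t, E.cover_prod_rightHom_injective (Prod.ext ?_ ?_)⟩
  · exact (zpow_mem hrel t : relator σ w q ^ t ∈ E.cover.ker).trans hx.symm
  · rw [MonoidHom.prod_apply, MonoidHom.prod_apply, SemidirectProduct.rightHom_eq_right,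
      relator_zpow_right, ← ht, ofAdd_toAdd]

theorem nonempty_mulEquiv {H : Type*} [Group H] (E : CyclicExtension σ w q G)
    (F : CyclicExtension σ w q H) : Nonempty (G ≃* H) :=
  ⟨(QuotientGroup.quotientKerEquivOfSurjective E.cover E.cover_surjective).symm.trans <|
    (QuotientGroup.quotientMulEquivOfEq (E.ker_cover.trans F.ker_cover.symm)).trans <|
      QuotientGroup.quotientKerEquivOfSurjective F.cover F.cover_surjective⟩

theorem relator_mem_center (hw : σ w = w) (hσ : σ ^ q = MulAut.conj w) :
    relator σ w q ∈ Subgroup.center (Cover σ) := by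
  have hpow (j : ℤ) : (σ ^ j) w = w :=
    zpow_mem (show σ ∈ MulAction.stabilizer (MulAut N) w from hw) j
  rw [Subgroup.mem_center_iff]
  intro x
  ext
  · simp [relator, hpow, hσ, mul_assoc]
  · simp [relator, mul_comm]

/-- The quotient of the universal group by the relation `gen ^ q = inl w`, as a cyclic extension. -/
def coverQuotient [(Subgroup.zpowers (relator σ w q)).Normal] (hq : q ≠ 0) :
    CyclicExtension σ w q (Cover σ ⧸ Subgroup.zpowers (relator σ w q)) where
  inl := (QuotientGroup.mk' _).comp SemidirectProduct.inl
  rightHom := QuotientGroup.lift _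
    ((Int.castAddHom (ZMod q)).toMultiplicative.comp SemidirectProduct.rightHom) (by
      rintro _ ⟨t, rfl⟩
      simp [relator_zpow_right])
  inl_injective := by
    rw [injective_iff_map_eq_one]
    intro n hn
    obtain ⟨t, ht⟩ := (QuotientGroup.eq_one_iff _).1 hn
    have hright := congrArg SemidirectProduct.right ht
    obtain rfl : t = 0 := by simpa [relator_zpow_right, hq] using hright
    simpa using (congrArg SemidirectProduct.left ht).symm
  range_inl_eq_ker_rightHom := by
    refine le_antisymm ?_ fun g hg ↦ ?_
    · rintro _ ⟨n, rfl⟩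
      simp [MonoidHom.mem_ker]
    · obtain ⟨x, rfl⟩ := QuotientGroup.mk_surjective g
      obtain ⟨t, ht⟩ : (q : ℤ) ∣ toAdd x.right := by
        rw [← ZMod.intCast_zmod_eq_zero_iff_dvd]
        exact congrArg toAdd hg
      obtain ⟨n, hn⟩ : x * relator σ w q ^ (-t) ∈ (SemidirectProduct.inl : N →* Cover σ).range := by
        rw [SemidirectProduct.range_inl_eq_ker_rightHom, MonoidHom.mem_ker,
          SemidirectProduct.rightHom_eq_right, SemidirectProduct.mul_right, relator_zpow_right,
          mul_neg, ← ht, ofAdd_neg, ofAdd_toAdd, mul_inv_cancel]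
      refine ⟨n, QuotientGroup.eq.2 ⟨t, ?_⟩⟩
      simp [hn]
  rightHom_surjective j := by
    obtain ⟨i, hi⟩ := ZMod.intCast_surjective (toAdd j)
    exact ⟨QuotientGroup.mk (SemidirectProduct.inr (ofAdd i)), congrArg ofAdd hi⟩
  gen := QuotientGroup.mk (SemidirectProduct.inr (ofAdd 1))
  rightHom_gen := by simp
  gen_conj_inl n := by
    have := SemidirectProduct.inl_aut (φ := zpowersHom (MulAut N) σ) (ofAdd 1) n
    simpa using (congrArg (QuotientGroup.mk' (Subgroup.zpowers (relator σ w q))) this).symm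
  gen_pow := by
    refine QuotientGroup.eq.2 ⟨-1, ?_⟩
    simp [relator, SemidirectProduct.mk_eq_inl_mul_inr, ← map_pow, ← ofAdd_nsmul]

theorem exists_of_map_self_eq (hq : q ≠ 0) (hw : σ w = w) (hσ : σ ^ q = MulAut.conj w) :
    ∃ (G : Type u) (_ : Group G) (π : Cover σ →* G),
      Function.Surjective π ∧ Nonempty (CyclicExtension σ w q G) := by
  have : (Subgroup.zpowers (relator σ w q)).Normal := ⟨fun x hx g ↦ by
    have hcen := Subgroup.zpowers_le.2 (relator_mem_center hw hσ) hx
    rwa [Subgroup.mem_center_iff.1 hcen g, mul_inv_cancel_right]⟩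
  exact ⟨_, _, QuotientGroup.mk' _, QuotientGroup.mk'_surjective _, ⟨coverQuotient hq⟩⟩

end Cover

section Normal

variable {G : Type*} [Group G]

/-- A group with a normal subgroup `N` such that `x` generates the finite quotient by `N`, as a
cyclic extension of `N`. -/
noncomputable def ofNormal (N : Subgroup G) [N.Normal] (x : G) {q : ℕ} (hq : q ≠ 0)
    (hindex : N.index = q) (hx : orderOf (x : G ⧸ N) = q) :
    CyclicExtension (MulAut.conjNormal x)
      (⟨x ^ q, (QuotientGroup.eq_one_iff _).1 (hx ▸ pow_orderOf_eq_one (x : G ⧸ N))⟩ : N) q G :=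
  have : Finite (G ⧸ N) := Nat.finite_of_card_ne_zero (hindex.trans_ne hq)
  have hgen : ∀ y, y ∈ Subgroup.zpowers (x : G ⧸ N) := fun y ↦ by
    rw [Subgroup.eq_top_of_card_eq (Subgroup.zpowers (x : G ⧸ N))
      (by rw [Nat.card_zpowers, hx]; exact hindex.symm)]
    exact Subgroup.mem_top y
  have hgen' : ∀ y, y ∈ Subgroup.zpowers (ofAdd (1 : ZMod q)) := fun y ↦ by
    obtain ⟨j, hj⟩ := ZMod.intCast_surjective (toAdd y)
    exact ⟨j, by rw [← ofAdd_toAdd y, ← hj, ← zsmul_one, ofAdd_zsmul]⟩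
  have hord : orderOf (x : G ⧸ N) = orderOf (ofAdd (1 : ZMod q)) := by
    rw [hx, orderOf_ofAdd_eq_addOrderOf, ZMod.addOrderOf_one]
  let e : G ⧸ N ≃* Multiplicative (ZMod q) := mulEquivOfOrderOfEq hgen hgen' hord
  { inl := N.subtype
    rightHom := (e : G ⧸ N →* Multiplicative (ZMod q)).comp (QuotientGroup.mk' N)
    inl_injective := N.subtype_injective
    range_inl_eq_ker_rightHom := by
      rw [N.range_subtype, MonoidHom.ker_mulEquiv_comp, QuotientGroup.ker_mk']
    rightHom_surjective := e.surjective.comp (QuotientGroup.mk'_surjective N)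
    gen := x
    rightHom_gen := mulEquivOfOrderOfEq_apply_gen hgen (hg' := hgen') (h := hord)
    gen_conj_inl n := by simp
    gen_pow := rfl }

end Normal

section Power

variable {N G : Type*} [Group N] [Group G] {σ : MulAut N} {w : N} {q k : ℕ}
  (E : CyclicExtension σ w q G)

include E

theorem orderOf_gen (hq : q ≠ 0) : orderOf E.gen = q * orderOf w := by
  have hdvd : q ∣ orderOf E.gen := by
    rw [← Int.natCast_dvd_natCast, ← E.gen_zpow_mem_range_inl_iff, zpow_natCast,
      pow_orderOf_eq_one]
    exact one_mem _
  rw [← orderOf_injective E.inl E.inl_injective, ← E.gen_pow, orderOf_pow_of_dvd hq hdvd,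
    Nat.mul_div_cancel' hdvd]

theorem pow_eq_pow_of_rightHom_eq (hG : HasHallPowerLaw k G) (hN : ∀ n : N, n ^ k = 1) {x y : G}
    (hxy : E.rightHom x = E.rightHom y) : x ^ k = y ^ k := by
  obtain ⟨n, hn⟩ : x⁻¹ * y ∈ E.inl.range := by
    rw [mem_range_inl_iff, map_mul, map_inv, hxy, inv_mul_cancel]
  rw [hG, ← hn, ← map_pow, hN, map_one]

theorem inl_mul_gen_zpow_pow (hG : HasHallPowerLaw k G) (hN : ∀ n : N, n ^ k = 1) (n : N)
    (j : ℤ) : (E.inl n * E.gen ^ j) ^ k = (E.gen ^ k) ^ j := by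
  rw [E.pow_eq_pow_of_rightHom_eq hG hN (y := E.gen ^ j) (by simp), ← zpow_natCast,
    ← zpow_natCast, zpow_comm]

theorem mul_pow (hG : HasHallPowerLaw k G) (hN : ∀ n : N, n ^ k = 1) (x y : G) :
    (x * y) ^ k = x ^ k * y ^ k := by
  obtain ⟨n, i, rfl⟩ := E.exists_eq_inl_mul_gen_zpow x
  obtain ⟨n', j, rfl⟩ := E.exists_eq_inl_mul_gen_zpow y
  rw [E.inl_mul_gen_zpow_pow hG hN, E.inl_mul_gen_zpow_pow hG hN, ← zpow_add,
    ← E.inl_mul_gen_zpow_pow hG hN 1]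
  exact E.pow_eq_pow_of_rightHom_eq hG hN (by simp [zpow_add])

theorem index_torsion (hG : HasHallPowerLaw k G) (hN : ∀ n : N, n ^ k = 1) :
    hG.torsion.index = orderOf (E.gen ^ k) := by
  let powHom : G →* G := MonoidHom.mk' (· ^ k) (E.mul_pow hG hN)
  have hker : powHom.ker = hG.torsion := rfl
  have hrange : powHom.range = Subgroup.zpowers (E.gen ^ k) := by
    ext g
    constructor
    · rintro ⟨x, rfl⟩
      obtain ⟨n, j, rfl⟩ := E.exists_eq_inl_mul_gen_zpow x
      exact ⟨j, (E.inl_mul_gen_zpow_pow hG hN n j).symm⟩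
    · rintro ⟨j, rfl⟩
      exact ⟨_, E.inl_mul_gen_zpow_pow hG hN 1 j⟩
  rw [← hker, Subgroup.index_ker, hrange, Nat.card_zpowers]

theorem pow_eq_one_iff_mem_range_inl (hG : HasHallPowerLaw k G) (hN : ∀ n : N, n ^ k = 1)
    (hq : q ≠ 0) (hk : k ≠ 0) (hw : orderOf w = k) {g : G} : g ^ k = 1 ↔ g ∈ E.inl.range := by
  refine ⟨fun hg ↦ ?_, ?_⟩
  · obtain ⟨n, j, rfl⟩ := E.exists_eq_inl_mul_gen_zpow g
    rw [E.inl_mul_gen_zpow_pow hG hN, ← zpow_natCast, ← zpow_mul, ← orderOf_dvd_iff_zpow_eq_one,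
      E.orderOf_gen hq, hw, mul_comm q, Nat.cast_mul] at hg
    exact mul_mem ⟨n, rfl⟩ (E.gen_zpow_mem_range_inl_iff.2
      (Int.dvd_of_mul_dvd_mul_left (by exact_mod_cast hk) hg))
  · rintro ⟨n, rfl⟩
    rw [← map_pow, hN, map_one]

end Power

section Omega

variable {N G : Type} [Group N] [Group G] {σ : MulAut N} {w : N} {p l m : ℕ}
  (E : CyclicExtension σ w (p ^ m) G) (hG : ∀ i, HasHallPowerLaw (p ^ i) G)
  (hN : ∀ n : N, n ^ p ^ l = 1) (hw : orderOf w = p ^ l)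

include E hG hN hw

theorem omegaSubgroup_eq_map (hp : p ≠ 0) {r : ℕ} (hr : r ≤ l) :
    OmegaSubgroup p G r = (OmegaSubgroup p N r).map E.inl := by
  rw [OmegaSubgroup, OmegaSubgroup, MonoidHom.map_closure]
  congr 1
  ext g
  constructor
  · intro (hg : g ^ p ^ r = 1)
    obtain ⟨n, rfl⟩ := (E.pow_eq_one_iff_mem_range_inl (hG l) hN (pow_ne_zero m hp)
      (pow_ne_zero l hp) hw).1 (pow_pow_eq_one_of_le hr hg)
    exact ⟨n, E.inl_injective (by rw [map_pow, hg, map_one]), rfl⟩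
  · rintro ⟨n, hn : n ^ p ^ r = 1, rfl⟩
    exact (map_pow E.inl n _).symm.trans (hn ▸ map_one E.inl)

theorem index_omegaSubgroup (hp : p ≠ 0) {r : ℕ} (hr : l ≤ r) :
    (OmegaSubgroup p G r).index = p ^ (m + l - r) := by
  rw [(hG r).omegaSubgroup_eq_torsion,
    E.index_torsion (hG r) fun n ↦ pow_pow_eq_one_of_le hr (hN n),
    orderOf_pow' _ (pow_ne_zero r hp), E.orderOf_gen (pow_ne_zero m hp), hw, ← pow_add]
  rcases le_total r (m + l) with h | h
  · rw [Nat.gcd_eq_right (pow_dvd_pow p h), Nat.pow_div h (Nat.pos_of_ne_zero hp)]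
  · rw [Nat.gcd_eq_left (pow_dvd_pow p h), Nat.div_self (pow_pos (Nat.pos_of_ne_zero hp) _),
      Nat.sub_eq_zero_of_le h, pow_zero]

theorem omegaInv_eq (hp : p ≠ 0) {r : ℕ} (hr : r ≤ l) : omegaInv p G r = omegaInv p N r := by
  rw [omegaInv, omegaInv, E.omegaSubgroup_eq_map hG hN hw hp hr,
    E.omegaSubgroup_eq_map hG hN hw hp ((Nat.sub_le r 1).trans hr),
    Subgroup.relIndex_map_map_of_injective _ _ E.inl_injective]

variable (hp : p.Prime)

include hp

theorem omegaInv_eq_ite {r : ℕ} (hr : l < r) :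
    omegaInv p G r = if r ≤ m + l then 1 else 0 := by
  have hindex := Subgroup.relIndex_mul_index (omegaSubgroup_mono (p := p) (G := G) (Nat.sub_le r 1))
  rw [E.index_omegaSubgroup hG hN hw hp.ne_zero hr.le,
    E.index_omegaSubgroup hG hN hw hp.ne_zero (Nat.le_sub_one_of_lt hr)] at hindex
  have hrel : (OmegaSubgroup p G (r - 1)).relIndex (OmegaSubgroup p G r) =
      p ^ (if r ≤ m + l then 1 else 0) := by
    refine Nat.eq_of_mul_eq_mul_right (pow_pos hp.pos (m + l - r)) (hindex.trans ?_)
    rw [← pow_add]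
    congr 1
    split_ifs <;> omega
  rw [omegaInv, hrel, hp.factorization_pow, Finsupp.single_eq_same]

theorem muInv_one [Finite G] (hP : IsPGroup p G) (hm : m ≠ 0) : muInv p G 1 = m + l := by
  have : Fact p.Prime := ⟨hp⟩
  suffices {i | 1 ≤ i ∧ 1 ≤ omegaInv p G i} = Set.Icc 1 (m + l) by
    rw [muInv_eq_ncard, this, Set.ncard_Icc_nat, Nat.add_sub_cancel]
  ext r
  refine and_congr_right fun hr ↦ ⟨fun hpos ↦ ?_, fun hle ↦ ?_⟩
  · by_contra hlt
    rw [E.omegaInv_eq_ite hG hN hw hp (by omega), if_neg hlt] at hpos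
    omega
  · calc 1 = omegaInv p G (m + l) := by
          rw [E.omegaInv_eq_ite hG hN hw hp (by omega), if_pos le_rfl]
      _ ≤ omegaInv p G r := omegaInv_le_of_le hP hG hr hle

theorem muInv_add_two (j : ℕ) : muInv p G (j + 2) = muInv p N (j + 2) := by
  refine Nat.card_congr (Equiv.subtypeEquivRight fun r ↦ and_congr_right fun _ ↦ ?_)
  rcases le_or_gt r l with hr | hr
  · rw [E.omegaInv_eq hG hN hw hp.ne_zero hr]
  · rw [E.omegaInv_eq_ite hG hN hw hp hr,
      omegaInv_eq_zero fun n ↦ pow_pow_eq_one_of_le (Nat.le_sub_one_of_lt hr) (hN n)]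
    split_ifs <;> omega

theorem hasTypeInvariants_cons_iff [Finite G] (hP : IsPGroup p G) (hm : m ≠ 0) {l' : List ℕ} :
    HasTypeInvariants p G ((m + l) :: l') ↔ ∀ i, muInv p N (i + 2) = l'.getD i 0 := by
  simp only [← E.muInv_add_two hG hN hw hp]
  refine ⟨fun h i ↦ h (i + 1), fun h i ↦ ?_⟩
  cases i with
  | zero => exact E.muInv_one hG hN hw hp hP hm
  | succ i => exact h i

end Omega

theorem exists_of_hasTypeInvariants {p m l : ℕ} [Fact p.Prime] {rest : List ℕ} {G : Type} [Group G]
    [Finite G] (hT : HasTypeInvariants p G ((m + l) :: l :: rest)) (hP : IsPGroup p G)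
    (hG : ∀ i, HasHallPowerLaw (p ^ i) G) (hl : 0 < l) (hm : 0 < m) :
    ∃ (σ : MulAut (OmegaSubgroup p G l)) (w : OmegaSubgroup p G l),
      orderOf w = p ^ l ∧ Nonempty (CyclicExtension σ w (p ^ m) G) := by
  have hp : p.Prime := Fact.out
  have hq : p ^ m ≠ 0 := pow_ne_zero _ hp.ne_zero
  have hnormal : (OmegaSubgroup p G l).Normal := (hG l).omegaSubgroup_eq_torsion ▸ inferInstance
  obtain ⟨x, hx⟩ := hT.exists_orderOf_eq hP hG hl (by omega)
  let E := ofNormal _ x hq (by rw [hT.index_omegaSubgroup hP hG hl (by omega), Nat.add_sub_cancel])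
    (orderOf_mk_omegaSubgroup hp.pos (hG l) (by rw [hx, add_comm]))
  refine ⟨_, _, Nat.eq_of_mul_eq_mul_left (Nat.pos_of_ne_zero hq) ?_, ⟨E⟩⟩
  rw [← E.orderOf_gen hq, ← pow_add]
  exact hx

section Twist

variable {N M G H : Type*} [Group N] [Group M] [Group G] [Group H]

/-- An isomorphism between the kernels of cyclic extensions with data `(σ, w)` and `(τ, v)` which
turns `σ` and `w` into the action and the power of `inl twist * gen ^ u`, where `gen` is the
distinguished element of the second extension. For kernels of small exponent this notion does not
involve the order `q` of the cyclic quotient. -/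
structure TwistedEquiv (σ : MulAut N) (w : N) (τ : MulAut M) (v : M) (u : ℤ)
    extends N ≃* M where
  twist : M
  map_aut : ∀ n, toMulEquiv (σ n) = twist * (τ ^ u) (toMulEquiv n) * twist⁻¹
  map_pow : toMulEquiv w = v ^ u

variable {σ : MulAut N} {w : N} {τ : MulAut M} {v : M} {q : ℕ}

/-- The cyclic extension with data `(σ, w)` obtained from one with data `(τ, v)` by taking
`inl twist * gen ^ u` as distinguished element. -/
noncomputable def ofTwistedEquiv {u : ℤ} (F : CyclicExtension τ v q H)
    (T : TwistedEquiv σ w τ v u) (hu : IsUnit (u : ZMod q)) (hH : HasHallPowerLaw q H)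
    (hM : ∀ x : M, x ^ q = 1) : CyclicExtension σ w q H :=
  F.reparametrize T.toMulEquiv (F.inl T.twist * F.gen ^ u)
    (by rwa [map_mul, F.rightHom_gen_zpow, F.mem_range_inl_iff.1 ⟨_, rfl⟩, one_mul])
    (fun n ↦ by
      rw [T.map_aut, map_mul, map_mul, map_inv, ← F.gen_zpow_conj_inl]
      group)
    (by rw [F.inl_mul_gen_zpow_pow hH hM, F.gen_pow, T.map_pow, map_zpow])

theorem isUnit_map_gen (E : CyclicExtension σ w q G) {q' : ℕ}
    (ψ : G →* Multiplicative (ZMod q')) (hψ : Function.Surjective ψ)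
    (hker : ∀ n, ψ (E.inl n) = 1) : IsUnit (toAdd (ψ E.gen)) := by
  obtain ⟨g, hg⟩ := hψ (ofAdd 1)
  obtain ⟨n, j, rfl⟩ := E.exists_eq_inl_mul_gen_zpow g
  refine IsUnit.of_mul_eq_one_right (j : ZMod q') ?_
  rw [map_mul, hker, one_mul, map_zpow] at hg
  rw [← zsmul_eq_mul, ← toAdd_zpow, hg, toAdd_ofAdd]

theorem exists_twistedEquiv (E : CyclicExtension σ w q G) (F : CyclicExtension τ v q H)
    (φ : G ≃* H) (hφ : E.inl.range.map φ = F.inl.range) (hH : HasHallPowerLaw q H)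
    (hM : ∀ x : M, x ^ q = 1) :
    ∃ u : ℤ, IsUnit (u : ZMod q) ∧ Nonempty (TwistedEquiv σ w τ v u) := by
  let f : N ≃* M := (MonoidHom.ofInjective E.inl_injective).trans <|
    (φ.subgroupMap _).trans <| (MulEquiv.subgroupCongr hφ).trans <|
      (MonoidHom.ofInjective F.inl_injective).symm
  have hf (n : N) : F.inl (f n) = φ (E.inl n) :=
    congrArg Subtype.val ((MonoidHom.ofInjective F.inl_injective).apply_symm_apply _)
  obtain ⟨t, u, htu⟩ := F.exists_eq_inl_mul_gen_zpow (φ E.gen)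
  have hu : F.rightHom (φ E.gen) = ofAdd (u : ZMod q) := by
    rw [htu, map_mul, F.rightHom_gen_zpow, F.mem_range_inl_iff.1 ⟨t, rfl⟩, one_mul]
  refine ⟨u, ?_, ⟨{ f with twist := t, map_aut := fun n ↦ ?_, map_pow := ?_ }⟩⟩
  · have := E.isUnit_map_gen (F.rightHom.comp φ.toMonoidHom)
      (F.rightHom_surjective.comp φ.surjective)
      fun n ↦ F.mem_range_inl_iff.1 ⟨f n, hf n⟩
    rwa [MonoidHom.comp_apply, MulEquiv.coe_toMonoidHom, hu, toAdd_ofAdd] at this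
  · apply F.inl_injective
    rw [hf, ← E.gen_conj_inl, map_mul, map_mul, map_inv, htu, map_mul, map_mul, map_inv,
      ← F.gen_zpow_conj_inl, hf]
    group
  · apply F.inl_injective
    rw [hf, ← E.gen_pow, map_pow, htu, F.inl_mul_gen_zpow_pow hH hM, F.gen_pow, map_zpow]

end Twist

section Regular

variable {p l m m' : ℕ} {N G : Type} [Group N] [Group G] {σ : MulAut N} {w : N}

theorem gen_pow_mem_center {q k : ℕ} (E : CyclicExtension σ w q G) (hG : HasHallPowerLaw k G)
    (hN : ∀ n : N, n ^ k = 1) : E.gen ^ k ∈ Subgroup.center G := by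
  rw [Subgroup.mem_center_iff]
  intro g
  rw [← mul_inv_eq_iff_eq_mul, ← conj_pow]
  exact E.pow_eq_pow_of_rightHom_eq hG hN (by rw [map_mul, map_mul, map_inv, mul_inv_cancel_comm])

theorem pow_eq_one_of_gen_pow_mem_center {q k : ℕ} (E : CyclicExtension σ w q G)
    (hk : E.gen ^ k ∈ Subgroup.center G) : σ ^ k = 1 := by
  ext n
  apply E.inl_injective
  rw [← zpow_natCast, ← E.gen_zpow_conj_inl, zpow_natCast, ← Subgroup.mem_center_iff.1 hk,
    mul_inv_cancel_right]
  rfl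

-- The new extension is regular as a quotient of `Cover σ`, which embeds into `G × ℤ`.
theorem exists_isRegularPGroup (E : CyclicExtension σ w (p ^ m) G) (hp : p ≠ 0)
    (hR : IsRegularPGroup p G) (hG : ∀ i, HasHallPowerLaw (p ^ i) G)
    (hN : ∀ n : N, n ^ p ^ l = 1) (hm : l ≤ m) (hm' : l ≤ m') (F : Type) [Finite F] [Nonempty F]
    (hF : Nat.card F = p ^ m' * Nat.card N) :
    ∃ _ : Group F, IsRegularPGroup p F ∧ Nonempty (CyclicExtension σ w (p ^ m') F) := by
  have hσ {r : ℕ} (hr : l ≤ r) : σ ^ p ^ r = 1 :=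
    E.pow_eq_one_of_gen_pow_mem_center <|
      E.gen_pow_mem_center (hG r) fun n ↦ pow_pow_eq_one_of_le hr (hN n)
  obtain ⟨G', _, π, hπ, ⟨E'⟩⟩ := exists_of_map_self_eq (σ := σ) (w := w) (pow_ne_zero m' hp)
    E.map_self_eq (by rw [← E.pow_eq_conj, hσ hm, hσ hm'])
  have hR' : IsRegularPGroup p G' := ((hR.prod (A := Multiplicative ℤ)).of_injective _
    E.cover_prod_rightHom_injective).of_surjective π hπ
  have hcard : Nat.card F = Nat.card G' := hF.trans E'.card_eq.symm
  have : Finite G' := Nat.finite_of_card_ne_zero (hcard ▸ Nat.card_pos.ne')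
  obtain ⟨e⟩ : Nonempty (F ≃ G') := Finite.card_eq.1 hcard
  let _ : Group F := e.group
  exact ⟨_, hR'.of_injective e.mulEquiv.toMonoidHom e.injective, ⟨E'.ofMulEquiv e.mulEquiv.symm⟩⟩

end Regular

end CyclicExtension

/-! ### The correspondence of isomorphism classes -/

/-- `G` and `G'` are cyclic extensions, with cyclic quotients of orders `p ^ m` and `p ^ m'`, of the
same group `N` with the same data `(σ, w)`, where `N` has exponent `p ^ l`, which is the order of
`w`. For regular `p`-groups this relates the groups of type `(m + l, l, ...)` to those of type
`(m' + l, l, ...)`. -/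
def HaveCommonCyclicData (p l m m' : ℕ) (G G' : Type) [Group G] [Group G'] : Prop :=
  ∃ (N : Type) (_ : Group N) (σ : MulAut N) (w : N), (∀ n : N, n ^ p ^ l = 1) ∧
    orderOf w = p ^ l ∧ Nonempty (CyclicExtension σ w (p ^ m) G) ∧
      Nonempty (CyclicExtension σ w (p ^ m') G')

namespace HaveCommonCyclicData

variable {p l m m' : ℕ} {G G' H H' : Type} [Group G] [Group G'] [Group H] [Group H']

theorem symm (h : HaveCommonCyclicData p l m m' G G') : HaveCommonCyclicData p l m' m G' G :=
  let ⟨N, inst, σ, w, hN, hw, hE, hE'⟩ := h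
  ⟨N, inst, σ, w, hN, hw, hE', hE⟩

theorem nonempty_mulEquiv (hGG' : HaveCommonCyclicData p l m m' G G')
    (hHH' : HaveCommonCyclicData p l m m' H H') (hp : p.Prime) (hl : 0 < l) (hm : l ≤ m)
    (hm' : l ≤ m') (hG : HasHallPowerLaw (p ^ l) G) (hH : ∀ i, HasHallPowerLaw (p ^ i) H)
    (hH' : HasHallPowerLaw (p ^ m') H') (φ : G ≃* H) : Nonempty (G' ≃* H') := by
  obtain ⟨N, _, σ, w, hN, hw, ⟨E⟩, ⟨E'⟩⟩ := hGG'
  obtain ⟨M, _, τ, v, hM, hv, ⟨F⟩, ⟨F'⟩⟩ := hHH'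
  have hpow (i : ℕ) : p ^ i ≠ 0 := pow_ne_zero i hp.ne_zero
  have hφ : E.inl.range.map φ = F.inl.range := by
    ext h
    rw [Subgroup.map_equiv_eq_comap_symm, Subgroup.mem_comap,
      ← E.pow_eq_one_iff_mem_range_inl hG hN (hpow m) (hpow l) hw,
      ← F.pow_eq_one_iff_mem_range_inl (hH l) hM (hpow m) (hpow l) hv, ← map_pow]
    exact φ.symm.map_eq_one_iff
  obtain ⟨u, hu, ⟨T⟩⟩ := E.exists_twistedEquiv F φ hφ (hH m)
    fun n ↦ pow_pow_eq_one_of_le hm (hM n)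
  have hu' : IsUnit (u : ZMod (p ^ m')) := by
    rw [ZMod.coe_int_isUnit_iff_isCoprime, Nat.cast_pow] at hu ⊢
    exact ((IsCoprime.pow_left_iff (by omega)).1 hu).pow_left
  exact E'.nonempty_mulEquiv
    (F'.ofTwistedEquiv T hu' hH' fun n ↦ pow_pow_eq_one_of_le hm' (hM n))

theorem nonempty_mulEquiv_iff (hGG' : HaveCommonCyclicData p l m m' G G')
    (hHH' : HaveCommonCyclicData p l m m' H H') (hp : p.Prime) (hl : 0 < l) (hm : l ≤ m)
    (hm' : l ≤ m') (hG : HasHallPowerLaw (p ^ l) G) (hG' : HasHallPowerLaw (p ^ l) G')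
    (hH : ∀ i, HasHallPowerLaw (p ^ i) H) (hH' : ∀ i, HasHallPowerLaw (p ^ i) H') :
    Nonempty (G ≃* H) ↔ Nonempty (G' ≃* H') :=
  ⟨fun ⟨φ⟩ ↦ hGG'.nonempty_mulEquiv hHH' hp hl hm hm' hG hH (hH' m') φ,
    fun ⟨φ⟩ ↦ hGG'.symm.nonempty_mulEquiv hHH'.symm hp hl hm' hm hG' hH' (hH m) φ⟩

end HaveCommonCyclicData

theorem HasTypeInvariants.exists_haveCommonCyclicData {p l m m' k : ℕ} {rest : List ℕ} {G : Type}
    [Group G] (hT : HasTypeInvariants p G ((m + l) :: l :: rest)) (hR : IsRegularPGroup p G)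
    (hcard : Nat.card G = p ^ (m + l + k)) (hp : p.Prime) (hl : 0 < l) (hm : l ≤ m)
    (hm' : l ≤ m') {F : Type} (hF : Nat.card F = p ^ (m' + l + k)) :
    ∃ _ : Group F, (IsRegularPGroup p F ∧ HasTypeInvariants p F ((m' + l) :: l :: rest)) ∧
      HaveCommonCyclicData p l m m' G F := by
  have : Fact p.Prime := ⟨hp⟩
  have hpow (i : ℕ) : p ^ i ≠ 0 := pow_ne_zero i hp.ne_zero
  have : Finite G := Nat.finite_of_card_ne_zero (hcard.trans_ne (hpow _))
  have hF₀ : Nat.card F ≠ 0 := hF.trans_ne (hpow _)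
  have : Finite F := Nat.finite_of_card_ne_zero hF₀
  have : Nonempty F := (Nat.card_ne_zero.1 hF₀).1
  have hP : IsPGroup p G := .of_card hcard
  have hG := hR.hasHallPowerLaw hP
  obtain ⟨σ, w, hw, ⟨E⟩⟩ := CyclicExtension.exists_of_hasTypeInvariants hT hP hG hl (by omega)
  have hN (n : OmegaSubgroup p G l) : n ^ p ^ l = 1 :=
    Subtype.ext ((hG l).mem_omegaSubgroup.1 n.2)
  have hcardN : Nat.card (OmegaSubgroup p G l) = p ^ (l + k) := by
    refine Nat.eq_of_mul_eq_mul_left (Nat.pos_of_ne_zero (hpow m)) ?_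
    rw [← E.card_eq, hcard, ← pow_add, add_assoc]
  obtain ⟨_, hR', ⟨E'⟩⟩ := E.exists_isRegularPGroup hp.ne_zero hR hG hN hm hm' F
    (by rw [hF, hcardN, ← pow_add, add_assoc])
  have hP' : IsPGroup p F := .of_card hF
  rw [E.hasTypeInvariants_cons_iff hG hN hw hp hP (by omega)] at hT
  exact ⟨_, ⟨hR', (E'.hasTypeInvariants_cons_iff (hR'.hasHallPowerLaw hP') hN hw hp hP'
    (by omega)).2 hT⟩, _, _, σ, w, hN, hw, ⟨E⟩, ⟨E'⟩⟩

theorem card_quot_eq_of_correspondence {α β : Type*} {r : α → α → Prop} {s : β → β → Prop}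
    (R : α → β → Prop) (hr : ∀ a, r a a) (hs : ∀ b, s b b) (hα : ∀ a, ∃ b, R a b)
    (hβ : ∀ b, ∃ a, R a b) (hR : ∀ ⦃a a' b b'⦄, R a b → R a' b' → (r a a' ↔ s b b')) :
    Nat.card (Quot r) = Nat.card (Quot s) := by
  choose F hF using hα
  choose B hB using hβ
  refine Nat.card_eq_of_bijective (Quot.map F fun a a' h ↦ (hR (hF a) (hF a')).1 h)
    (Function.bijective_iff_has_inverse.2
      ⟨Quot.map B fun b b' h ↦ (hR (hB b) (hB b')).2 h, ?_, ?_⟩)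
  · rintro ⟨a⟩
    exact Quot.sound ((hR (hB (F a)) (hF a)).2 (hs _))
  · rintro ⟨b⟩
    exact Quot.sound ((hR (hF (B b)) (hB b)).1 (hr _))

theorem psi_type_stable_general {p : ℕ} (hp : p.Prime) {l : ℕ} (hl : 0 < l) (rest : List ℕ)
    {e e' : ℕ} (he : 2 * l ≤ e) (he' : 2 * l ≤ e') :
    PsiType p e (l :: rest) = PsiType p e' (l :: rest) := by
  obtain ⟨m, rfl⟩ := Nat.exists_eq_add_of_le' (by omega : l ≤ e)
  obtain ⟨m', rfl⟩ := Nat.exists_eq_add_of_le' (by omega : l ≤ e')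
  have hm : l ≤ m := by omega
  have hm' : l ≤ m' := by omega
  unfold PsiType groupClassCount
  have hHall {n : ℕ} (s : Group (Fin (p ^ n))) (hs : IsRegularPGroup p (Fin (p ^ n))) (i : ℕ) :
      HasHallPowerLaw (p ^ i) (Fin (p ^ n)) :=
    have : Fact p.Prime := ⟨hp⟩
    hs.hasHallPowerLaw (.of_card (Nat.card_fin _)) i
  apply card_quot_eq_of_correspondence
    fun s t ↦ @HaveCommonCyclicData p l m m' _ _ s.1 t.1
  · exact fun s ↦ ⟨@MulEquiv.refl _ (mulOfGroup _ s.1)⟩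
  · exact fun s ↦ ⟨@MulEquiv.refl _ (mulOfGroup _ s.1)⟩
  · rintro ⟨s, hR, hT⟩
    obtain ⟨t, ht, h⟩ := hT.exists_haveCommonCyclicData hR (Nat.card_fin _) hp hl hm hm'
      (Nat.card_fin _)
    exact ⟨⟨t, ht⟩, h⟩
  · rintro ⟨t, hR, hT⟩
    obtain ⟨s, hs, h⟩ := hT.exists_haveCommonCyclicData hR (Nat.card_fin _) hp hl hm' hm
      (Nat.card_fin _)
    exact ⟨⟨s, hs⟩, h.symm⟩
  · rintro ⟨s, hs, _⟩ ⟨s', hs', _⟩ ⟨t, ht, _⟩ ⟨t', ht', _⟩ h h'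
    exact @HaveCommonCyclicData.nonempty_mulEquiv_iff p l m m' _ _ _ _ s t s' t' h h' hp hl hm hm'
      (hHall s hs l) (hHall t ht l) (hHall s' hs') (hHall t' ht')

/-- Let `f ≥ 1` and `p` a prime with `p > f + 1`.  For every partition
`(λ_1, ..., λ_k)` of `f`, the number `Ψ_{n-f}^p(λ_1, ..., λ_k)` is independent of `n`
provided `n ≥ f + 2λ_1`. -/
theorem psi_type_stable (f p : ℕ) (hf : 1 ≤ f) (hp : p.Prime) (hpf : p > f + 1)
    (lam1 : ℕ) (rest : List ℕ)
    (hsort : List.Pairwise (· ≥ ·) (lam1 :: rest))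
    (hpos : ∀ x ∈ lam1 :: rest, 0 < x)
    (hsum : (lam1 :: rest).sum = f)
    (n n' : ℕ) (hn : f + 2 * lam1 ≤ n) (hn' : f + 2 * lam1 ≤ n') :
    PsiType p (n - f) (lam1 :: rest) = PsiType p (n' - f) (lam1 :: rest) := by
  exact psi_type_stable_general hp (hpos lam1 (by simp)) rest (by omega) (by omega)
end

section
/- Let L be a nilpotent Lie ring of order p^n with additive coexponent f. Then the nilpotency class of L is at most f + 1. -/
/-- The lower central series of a Lie ring, as additive subgroups:
`lieLCS L 0 = L` and `lieLCS L (k+1) = [lieLCS L k, L]`. -/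
def lieLCS (L : Type) [LieRing L] : ℕ → AddSubgroup L
  | 0 => ⊤
  | (k + 1) => AddSubgroup.closure {x : L | ∃ y ∈ lieLCS L k, ∃ z : L, x = ⁅y, z⁆}

/-- A Lie ring is nilpotent if its lower central series reaches `⊥`. -/
def IsNilpotentLieRing (L : Type) [LieRing L] : Prop :=
  ∃ c : ℕ, lieLCS L c = ⊥

/-!
Let `rᵉ` be the least power of the scalar `r` that kills `L`, and filter `L` by the ideals `rⁱL`.
Multiplication by `rⁱ` identifies the layer `rⁱL / rⁱ⁺¹L` with a quotient of `L` by a Lie ideal. A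
nilpotent Lie algebra that is not cyclic as a module has class less than its length, because its
abelianization is not cyclic either and so has length at least two. Let `k` be the first index with
a cyclic layer. Each layer before it has length at least one more than the number of steps the lower
central series needs to descend from `rⁱL` to `rⁱ⁺¹L`, so the series enters `rᵏL` after some number
`s` of steps with `s + k` at most the length of `L / rᵏL`. The layers from there down to `rᵉL = 0`
are nonzero, hence `s + e` is at most the length of `L`. By Nakayama's lemma `rᵏL` is spanned by a
single `rᵏx`, so it is central: `⁅y, rᵏz⁆` is a multiple of `⁅rᵏy, x⁆`, hence of `rᵏ⁅x, x⁆ = 0`.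
Therefore one further commutator kills everything.
-/

open LieModule (lowerCentralSeries)
open scoped Pointwise

section Length

variable {R M N : Type*} [Ring R] [AddCommGroup M] [Module R M] [AddCommGroup N] [Module R N]

theorem isPrincipal_top_of_length_le_one (h : Module.length R M ≤ 1) :
    (⊤ : Submodule R M).IsPrincipal := by
  rcases Order.le_one_iff.mp h with h | h
  · rw [Module.length_eq_zero_iff] at h
    rw [Subsingleton.elim (⊤ : Submodule R M) ⊥]
    infer_instance
  · rw [Module.length_eq_one_iff] at h
    have := IsSimpleModule.nontrivial R M
    obtain ⟨x, hx⟩ := exists_ne (0 : M)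
    refine ⟨x, ?_⟩
    rw [← LinearMap.range_toSpanSingleton, LinearMap.range_eq_top.2]
    exact IsSimpleModule.toSpanSingleton_surjective R hx

theorem exists_span_singleton_sup_eq_top {P : Submodule R M}
    (h : (⊤ : Submodule R (M ⧸ P)).IsPrincipal) : ∃ x : M, Submodule.span R {x} ⊔ P = ⊤ := by
  obtain ⟨x', hx'⟩ := h
  obtain ⟨x, rfl⟩ := P.mkQ_surjective x'
  refine ⟨x, ?_⟩
  rw [sup_comm, ← Submodule.comap_map_mkQ, Submodule.map_span, Set.image_singleton, ← hx',
    Submodule.comap_top]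

theorem length_quotient_add_one_le_of_lt {P Q : Submodule R M} (h : P < Q) :
    Module.length R (M ⧸ Q) + 1 ≤ Module.length R (M ⧸ P) := by
  simpa only [Module.length_quotient] using Order.coheight_add_one_le h

theorem length_quotient_eq_length_quotient_comap_add (f : M →ₗ[R] N) {P : Submodule R N}
    (hP : P ≤ LinearMap.range f) :
    Module.length R (N ⧸ P) =
      Module.length R (M ⧸ P.comap f) + Module.length R (N ⧸ LinearMap.range f) := by
  refine Module.length_eq_add_of_exact ((P.comap f).mapQ P f le_rfl) (Submodule.factor hP) ?_
    (Submodule.factor_surjective hP) ?_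
  · rw [← LinearMap.ker_eq_bot, Submodule.ker_mapQ]
    simp
  · rw [LinearMap.exact_iff, Submodule.range_mapQ]
    simp [Submodule.factor, Submodule.ker_mapQ]

open ArithmeticFunction in
theorem length_le_cardFactors_card [Finite M] :
    Module.length R M ≤ (cardFactors (Nat.card M) : ℕ∞) := by
  have hmono : StrictMono fun P : Submodule R M ↦ cardFactors (Nat.card P) := by
    intro P Q hPQ
    obtain ⟨k, hk⟩ :=
      AddSubgroup.card_dvd_of_le (H := P.toAddSubgroup) (K := Q.toAddSubgroup) hPQ.le
    have hlt : Nat.card P < Nat.card Q := Set.Finite.card_lt_card (Set.toFinite _) hPQ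
    have hk1 : 1 < k := by
      refine lt_of_mul_lt_mul_left (a := Nat.card P) ?_ (Nat.zero_le _)
      rwa [mul_one, show Nat.card P * k = Nat.card Q from hk.symm]
    have hΩ : cardFactors (Nat.card Q) = cardFactors (Nat.card P) + cardFactors k :=
      hk ▸ cardFactors_mul Nat.card_pos.ne' (by omega)
    have := cardFactors_pos_iff_one_lt.2 hk1
    simp only [hΩ]
    omega
  rw [Module.length_eq_height]
  refine (Order.height_le_height_apply_of_strictMono _ hmono ⊤).trans ?_
  simp [Order.height_nat]

theorem length_le_of_card_eq_prime_pow {p n : ℕ} (hp : p.Prime) (hM : Nat.card M = p ^ n) :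
    Module.length R M ≤ n := by
  have : Finite M := Nat.finite_of_card_ne_zero (hM ▸ pow_ne_zero n hp.ne_zero)
  simpa only [hM, ArithmeticFunction.cardFactors_apply_prime_pow hp] using
    length_le_cardFactors_card (R := R) (M := M)

end Length

theorem le_of_le_sup_smul_of_pow_smul_eq_bot {R M : Type*} [CommRing R] [AddCommGroup M]
    [Module R M] {P Q : Submodule R M} {r : R} {n : ℕ}
    (hPQ : P ≤ Q ⊔ r • P) (hn : r ^ n • P = ⊥) : P ≤ Q := by
  have hiterate : ∀ m : ℕ, P ≤ Q ⊔ r ^ m • P := by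
    intro m
    induction m with
    | zero => simp
    | succ m ih =>
      calc P ≤ Q ⊔ r • P := hPQ
        _ ≤ Q ⊔ r • (Q ⊔ r ^ m • P) := by gcongr
        _ = (Q ⊔ r • Q) ⊔ r ^ (m + 1) • P := by
          rw [Submodule.smul_sup', smul_smul, ← pow_succ', sup_assoc]
        _ = Q ⊔ r ^ (m + 1) • P := by rw [sup_eq_left.2 (Submodule.smul_le_self_of_tower r Q)]
  simpa [hn] using hiterate n

section LowerCentralSeries

variable {R L M N : Type*} [CommRing R] [LieRing L] [LieAlgebra R L]
  [AddCommGroup M] [Module R M] [LieRingModule L M] [LieModule R L M]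
  [AddCommGroup N] [Module R N] [LieRingModule L N] [LieModule R L N]

theorem lowerCentralSeries_succ_lt [LieModule.IsNilpotent L M] {k : ℕ}
    (hk : lowerCentralSeries R L M k ≠ ⊥) :
    lowerCentralSeries R L M (k + 1) < lowerCentralSeries R L M k := by
  refine lt_of_le_not_ge (LieModule.antitone_lowerCentralSeries R L M k.le_succ) fun hle ↦ hk ?_
  have hstable : ∀ m, lowerCentralSeries R L M k ≤ lowerCentralSeries R L M (k + m) := by
    intro m
    induction m with
    | zero => exact le_rfl
    | succ m ih =>
      rw [LieModule.lowerCentralSeries_succ] at hle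
      rw [← add_assoc, LieModule.lowerCentralSeries_succ]
      exact hle.trans (LieSubmodule.mono_lie_right _ ih)
  obtain ⟨c, hc⟩ := LieModule.IsNilpotent.nilpotent R L M
  exact le_bot_iff.1 <| hc ▸ (hstable c).trans
    (LieModule.antitone_lowerCentralSeries R L M (Nat.le_add_left c k))

theorem lowerCentralSeries_add_le_map (f : M →ₗ⁅R,L⁆ N) {s : ℕ}
    (hs : lowerCentralSeries R L N s ≤ f.range) (t : ℕ) :
    lowerCentralSeries R L N (s + t) ≤ (lowerCentralSeries R L M t).map f := by
  induction t with
  | zero => simpa [LieModuleHom.map_top] using hs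
  | succ t ih =>
    rw [← add_assoc, LieModule.lowerCentralSeries_succ, LieModule.lowerCentralSeries_succ,
      LieSubmodule.map_bracket_eq]
    exact LieSubmodule.mono_lie_right _ ih

theorem lie_top_le_of_span_singleton_sup_eq_top {I : LieIdeal R L} {x : L}
    (hx : Submodule.span R {x} ⊔ I.toSubmodule = ⊤) :
    ⁅(⊤ : LieIdeal R L), (⊤ : LieIdeal R L)⁆ ≤ ⁅(⊤ : LieIdeal R L), I⁆ := by
  have hdecomp := LieSubmodule.exists_smul_add_of_span_sup_eq_top hx
  have hlie (y : L) {u : L} (hu : u ∈ I) : ⁅y, u⁆ ∈ ⁅(⊤ : LieIdeal R L), I⁆ :=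
    LieSubmodule.lie_mem_lie (LieSubmodule.mem_top y) hu
  refine (LieSubmodule.lie_le_iff _ _ _).2 fun y _ z _ ↦ ?_
  obtain ⟨a, u, hu, rfl⟩ := hdecomp y
  obtain ⟨b, v, hv, rfl⟩ := hdecomp z
  have hbracket : ⁅a • x + u, b • x + v⁆ = ⁅a • x + u, v⁆ - ⁅b • x, u⁆ := by
    rw [lie_add, add_lie (a • x) u (b • x), smul_lie, lie_smul, lie_self, smul_zero, smul_zero,
      zero_add, ← lie_skew u, sub_eq_add_neg, add_comm]
  rw [hbracket]
  exact sub_mem (hlie _ hv) (hlie _ hu)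

theorem lowerCentralSeries_quotient_eq_bot_iff {I : LieIdeal R L} {t : ℕ} :
    lowerCentralSeries R (L ⧸ I) (L ⧸ I) t = ⊥ ↔ lowerCentralSeries R L L t ≤ I := by
  rw [← LieSubmodule.toSubmodule_eq_bot, ← coe_lowerCentralSeries_ideal_quot_eq,
    LieSubmodule.toSubmodule_eq_bot,
    ← LieModule.map_lowerCentralSeries_eq _ (LieSubmodule.Quotient.surjective_mk' I),
    LieSubmodule.Quotient.map_mk'_eq_bot_le]

variable [LieRing.IsNilpotent L]

theorem isNilpotent_quotient (I : LieIdeal R L) : LieRing.IsNilpotent (L ⧸ I) := by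
  obtain ⟨c, hc⟩ := LieModule.IsNilpotent.nilpotent R L L
  exact LieModule.IsNilpotent.mk _ (lowerCentralSeries_quotient_eq_bot_iff.2 (hc.trans_le bot_le))

theorem lowerCentralSeries_one_eq_bot_of_isPrincipal_quotient
    (h : (⊤ : Submodule R (L ⧸ lowerCentralSeries R L L 1)).IsPrincipal) :
    lowerCentralSeries R L L 1 = ⊥ := by
  obtain ⟨x, hx⟩ := exists_span_singleton_sup_eq_top h
  by_contra hne
  exact (lowerCentralSeries_succ_lt hne).not_ge (lie_top_le_of_span_singleton_sup_eq_top hx)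

theorem add_two_le_length_quotient_lowerCentralSeries (hL : ¬ (⊤ : Submodule R L).IsPrincipal)
    {t : ℕ} (ht : lowerCentralSeries R L L t ≠ ⊥) :
    (t + 2 : ℕ) ≤ Module.length R (L ⧸ lowerCentralSeries R L L (t + 1)) := by
  induction t with
  | zero =>
    by_contra! hlt
    have hprincipal := isPrincipal_top_of_length_le_one (Order.le_of_lt_add_one hlt)
    obtain ⟨x, hx⟩ := exists_span_singleton_sup_eq_top hprincipal
    refine hL ⟨x, ?_⟩
    rwa [lowerCentralSeries_one_eq_bot_of_isPrincipal_quotient hprincipal,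
      LieSubmodule.bot_toSubmodule, sup_bot_eq, eq_comm] at hx
  | succ t ih =>
    have hlen := ih fun h ↦ ht <| le_bot_iff.1 <|
      h ▸ LieModule.antitone_lowerCentralSeries R L L t.le_succ
    calc ((t + 1 + 2 : ℕ) : ℕ∞) = (t + 2 : ℕ) + 1 := by norm_cast
      _ ≤ Module.length R (L ⧸ lowerCentralSeries R L L (t + 1)) + 1 := by gcongr
      _ ≤ _ := length_quotient_add_one_le_of_lt (lowerCentralSeries_succ_lt ht)

theorem exists_lowerCentralSeries_eq_bot_add_one_le_length
    (hL : ¬ (⊤ : Submodule R L).IsPrincipal) :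
    ∃ t : ℕ, lowerCentralSeries R L L t = ⊥ ∧ (t + 1 : ℕ) ≤ Module.length R L := by
  classical
  have hnil := LieModule.IsNilpotent.nilpotent R L L
  refine ⟨Nat.find hnil, Nat.find_spec hnil, ?_⟩
  cases ht : Nat.find hnil with
  | zero =>
    have htop : (⊤ : LieIdeal R L) = ⊥ := (Nat.find_eq_zero hnil).1 ht
    refine absurd ?_ hL
    rw [← LieSubmodule.top_toSubmodule (L := L), htop, LieSubmodule.bot_toSubmodule]
    infer_instance
  | succ t =>
    exact (add_two_le_length_quotient_lowerCentralSeries hL (Nat.find_min hnil (by omega))).trans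
      (Module.length_le_of_surjective _ (Submodule.mkQ_surjective _))

theorem exists_lowerCentralSeries_le_add_one_le_length_quotient {I : LieIdeal R L}
    (hI : ¬ (⊤ : Submodule R (L ⧸ I)).IsPrincipal) :
    ∃ t : ℕ, lowerCentralSeries R L L t ≤ I ∧ (t + 1 : ℕ) ≤ Module.length R (L ⧸ I) := by
  have := isNilpotent_quotient I
  obtain ⟨t, ht, hlen⟩ := exists_lowerCentralSeries_eq_bot_add_one_le_length hI
  exact ⟨t, lowerCentralSeries_quotient_eq_bot_iff.1 ht, hlen⟩

end LowerCentralSeries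

section Layers

variable {R L : Type*} [CommRing R] [LieRing L] [LieAlgebra R L]

variable (L) in
/-- The Lie ideal `rL` of multiples of a scalar `r`. -/
def smulIdeal (r : R) : LieIdeal R L :=
  (r • (LieModuleHom.id : L →ₗ⁅R,L⁆ L)).range

variable (L) in
/-- The kernel of the surjection `L → rⁱL / rⁱ⁺¹L` induced by multiplication by `rⁱ`, so that
`L ⧸ layerKernel L r i` is the `i`-th layer of the filtration of `L` by the ideals `rⁱL`. -/
def layerKernel (r : R) (i : ℕ) : LieIdeal R L :=
  LieSubmodule.comap (r ^ i • (LieModuleHom.id : L →ₗ⁅R,L⁆ L)) (smulIdeal L (r ^ (i + 1)))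

theorem mem_smulIdeal {r : R} {x : L} : x ∈ smulIdeal L r ↔ ∃ y, r • y = x := by
  simp [smulIdeal]

theorem mem_layerKernel {r : R} {i : ℕ} {x : L} :
    x ∈ layerKernel L r i ↔ ∃ y, r ^ (i + 1) • y = r ^ i • x := by
  simp [layerKernel, mem_smulIdeal]

theorem smulIdeal_eq_bot_iff {r : R} : smulIdeal L r = ⊥ ↔ ∀ x : L, r • x = 0 := by
  simp [LieSubmodule.eq_bot_iff, mem_smulIdeal]

theorem smulIdeal_one : smulIdeal L (1 : R) = ⊤ := by
  ext; simp [mem_smulIdeal]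

theorem smulIdeal_mul_le (r s : R) : smulIdeal L (r * s) ≤ smulIdeal L r := by
  intro x hx
  obtain ⟨y, rfl⟩ := mem_smulIdeal.1 hx
  exact mem_smulIdeal.2 ⟨s • y, smul_smul r s y⟩

theorem toSubmodule_smulIdeal_mul (r s : R) :
    (smulIdeal L (r * s)).toSubmodule = r • (smulIdeal L s).toSubmodule := by
  ext x
  simp [Submodule.mem_smul_pointwise_iff_exists, mem_smulIdeal, mul_smul]

theorem smul_smulIdeal_eq_bot {r : R} (hr : smulIdeal L r = ⊥) (s : R) :
    r • (smulIdeal L s).toSubmodule = ⊥ := by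
  rw [← toSubmodule_smulIdeal_mul, LieSubmodule.toSubmodule_eq_bot, ← le_bot_iff, ← hr]
  exact smulIdeal_mul_le _ _

theorem smulIdeal_pow_succ_lt {r : R} {e j : ℕ} (he : smulIdeal L (r ^ e) = ⊥)
    (hj : smulIdeal L (r ^ j) ≠ ⊥) : smulIdeal L (r ^ (j + 1)) < smulIdeal L (r ^ j) := by
  refine lt_of_le_not_ge (pow_succ r j ▸ smulIdeal_mul_le _ _) fun hle ↦ hj ?_
  rw [← LieSubmodule.toSubmodule_eq_bot, ← le_bot_iff]
  refine le_of_le_sup_smul_of_pow_smul_eq_bot (r := r) ?_ (smul_smulIdeal_eq_bot he _)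
  rwa [bot_sup_eq, ← toSubmodule_smulIdeal_mul, ← pow_succ']

theorem length_quotient_smulIdeal_pow_succ (r : R) (i : ℕ) :
    Module.length R (L ⧸ smulIdeal L (r ^ (i + 1))) =
      Module.length R (L ⧸ layerKernel L r i) + Module.length R (L ⧸ smulIdeal L (r ^ i)) :=
  length_quotient_eq_length_quotient_comap_add
    ((r ^ i • (LieModuleHom.id : L →ₗ⁅R,L⁆ L) : L →ₗ⁅R,L⁆ L) : L →ₗ[R] L)
    (pow_succ r i ▸ smulIdeal_mul_le _ _)

theorem add_le_length_quotient_smulIdeal_pow {r : R} {s k e : ℕ} (hke : k ≤ e)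
    (he : IsLeast {j : ℕ | smulIdeal L (r ^ j) = ⊥} e)
    (hk : (s + k : ℕ) ≤ Module.length R (L ⧸ smulIdeal L (r ^ k))) :
    (s + e : ℕ) ≤ Module.length R (L ⧸ smulIdeal L (r ^ e)) := by
  suffices ∀ j, k ≤ j → j ≤ e → (s + j : ℕ) ≤ Module.length R (L ⧸ smulIdeal L (r ^ j)) from
    this e hke le_rfl
  intro j hkj
  induction j, hkj using Nat.le_induction with
  | base => exact fun _ ↦ hk
  | succ j _ ih =>
    intro hje
    calc ((s + (j + 1) : ℕ) : ℕ∞) = (s + j : ℕ) + 1 := by norm_cast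
      _ ≤ Module.length R (L ⧸ smulIdeal L (r ^ j)) + 1 := by gcongr; exact ih (by omega)
      _ ≤ _ := length_quotient_add_one_le_of_lt
        (smulIdeal_pow_succ_lt he.1 fun hj ↦ (he.2 hj).not_gt hje)

theorem isPrincipal_top_quotient_layerKernel {r : R} {e : ℕ} (he : smulIdeal L (r ^ e) = ⊥) :
    (⊤ : Submodule R (L ⧸ layerKernel L r e)).IsPrincipal := by
  have htop : layerKernel L r e = ⊤ :=
    eq_top_iff.2 fun x _ ↦ mem_layerKernel.2 ⟨0, by rw [smul_zero, smulIdeal_eq_bot_iff.1 he]⟩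
  refine isPrincipal_top_of_length_le_one ?_
  rw [htop, Module.length_eq_zero_iff.2]
  · exact zero_le_one
  · exact Submodule.Quotient.subsingleton_iff.2 rfl

theorem exists_smulIdeal_le_span_of_isPrincipal_layer {r : R} {e k : ℕ}
    (he : smulIdeal L (r ^ e) = ⊥) (hk : (⊤ : Submodule R (L ⧸ layerKernel L r k)).IsPrincipal) :
    ∃ x : L, (smulIdeal L (r ^ k)).toSubmodule ≤ Submodule.span R {r ^ k • x} := by
  obtain ⟨x, hx⟩ := exists_span_singleton_sup_eq_top (P := (layerKernel L r k).toSubmodule) hk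
  refine ⟨x, le_of_le_sup_smul_of_pow_smul_eq_bot (r := r) ?_ (smul_smulIdeal_eq_bot he _)⟩
  intro y hy
  obtain ⟨z, rfl⟩ := mem_smulIdeal.1 hy
  obtain ⟨a, u, hu, rfl⟩ := LieSubmodule.exists_smul_add_of_span_sup_eq_top
    (I := layerKernel L r k) hx z
  obtain ⟨w, hw⟩ := mem_layerKernel.1 hu
  rw [smul_add, smul_comm]
  refine Submodule.add_mem_sup
    (Submodule.smul_mem _ _ (Submodule.mem_span_singleton_self _)) ?_
  rw [← toSubmodule_smulIdeal_mul, ← pow_succ']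
  exact mem_smulIdeal.2 ⟨w, hw⟩

theorem lie_top_smulIdeal_eq_bot_of_le_span {r : R} {x : L}
    (hx : (smulIdeal L r).toSubmodule ≤ Submodule.span R {r • x}) :
    ⁅(⊤ : LieIdeal R L), smulIdeal L r⁆ = ⊥ := by
  have hmul (y : L) : ∃ a : R, a • r • x = r • y :=
    Submodule.mem_span_singleton.1 (hx (mem_smulIdeal.2 ⟨y, rfl⟩))
  refine (LieSubmodule.lie_eq_bot_iff _ _).2 fun y _ z hz ↦ ?_
  obtain ⟨z, rfl⟩ := mem_smulIdeal.1 hz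
  obtain ⟨a, ha⟩ := hmul y
  obtain ⟨b, hb⟩ := hmul z
  calc ⁅y, r • z⁆ = b • ⁅r • y, x⁆ := by rw [← hb, lie_smul, lie_smul, smul_lie]
    _ = 0 := by rw [← ha, smul_lie, smul_lie, lie_self, smul_zero, smul_zero, smul_zero]

variable [LieRing.IsNilpotent L]

theorem exists_lowerCentralSeries_le_smulIdeal_pow {r : R} {i : ℕ}
    (hi : ∀ j < i, ¬ (⊤ : Submodule R (L ⧸ layerKernel L r j)).IsPrincipal) :
    ∃ s : ℕ, lowerCentralSeries R L L s ≤ smulIdeal L (r ^ i) ∧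
      (s + i : ℕ) ≤ Module.length R (L ⧸ smulIdeal L (r ^ i)) := by
  induction i with
  | zero => exact ⟨0, by simp [smulIdeal_one], by simp⟩
  | succ i ih =>
    obtain ⟨s, hs, hslen⟩ := ih fun j hj ↦ hi j (by omega)
    obtain ⟨t, ht, htlen⟩ :=
      exists_lowerCentralSeries_le_add_one_le_length_quotient (hi i i.lt_succ_self)
    refine ⟨s + t, ?_, ?_⟩
    · exact (lowerCentralSeries_add_le_map _ hs t).trans (LieSubmodule.map_le_iff_le_comap.2 ht)
    · rw [length_quotient_smulIdeal_pow_succ]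
      calc ((s + t + (i + 1) : ℕ) : ℕ∞) = (t + 1 : ℕ) + (s + i : ℕ) := by norm_cast; omega
        _ ≤ _ := add_le_add htlen hslen

theorem lie_coexponent_class_bound_general {r : R} {n e : ℕ} (hlen : Module.length R L ≤ n)
    (he : IsLeast {k : ℕ | ∀ x : L, r ^ k • x = 0} e) :
    lowerCentralSeries R L L (n - e + 1) = ⊥ := by
  classical
  simp only [← smulIdeal_eq_bot_iff] at he
  have hlast := isPrincipal_top_quotient_layerKernel he.1
  have hcyclic : ∃ k, (⊤ : Submodule R (L ⧸ layerKernel L r k)).IsPrincipal := ⟨e, hlast⟩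
  obtain ⟨s, hs, hslen⟩ := exists_lowerCentralSeries_le_smulIdeal_pow
    fun _ ↦ Nat.find_min hcyclic
  have hse : s + e ≤ n := by
    exact_mod_cast (add_le_length_quotient_smulIdeal_pow
      (Nat.find_min' hcyclic hlast) he hslen).trans
      ((Module.length_le_of_surjective _ (Submodule.mkQ_surjective _)).trans hlen)
  have hγ : lowerCentralSeries R L L (s + 1) = ⊥ := by
    obtain ⟨x, hx⟩ := exists_smulIdeal_le_span_of_isPrincipal_layer he.1 (Nat.find_spec hcyclic)
    rw [LieModule.lowerCentralSeries_succ, ← le_bot_iff, ← lie_top_smulIdeal_eq_bot_of_le_span hx]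
    exact LieSubmodule.mono_lie_right _ hs
  exact le_bot_iff.1 <| hγ ▸ LieModule.antitone_lowerCentralSeries R L L (by omega)

end Layers

section LieRing

variable {L : Type} [LieRing L]

theorem lieLCS_eq_toAddSubgroup_lowerCentralSeries (k : ℕ) :
    lieLCS L k = (lowerCentralSeries ℤ L L k).toSubmodule.toAddSubgroup := by
  induction k with
  | zero => rfl
  | succ k ih =>
    rw [lieLCS, ih, LieModule.lowerCentralSeries_succ, LieSubmodule.lieIdeal_oper_eq_linear_span',
      Submodule.span_int_eq_addSubgroupClosure]
    congr 1
    ext x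
    refine ⟨?_, ?_⟩
    · rintro ⟨y, hy, z, rfl⟩
      exact ⟨-z, LieSubmodule.mem_top _, y, hy, by rw [neg_lie, lie_skew]⟩
    · rintro ⟨z, -, y, hy, rfl⟩
      exact ⟨y, hy, -z, by rw [lie_neg, lie_skew]⟩

theorem lieLCS_eq_bot_iff {k : ℕ} : lieLCS L k = ⊥ ↔ lowerCentralSeries ℤ L L k = ⊥ := by
  rw [lieLCS_eq_toAddSubgroup_lowerCentralSeries, ← LieSubmodule.toSubmodule_eq_bot,
    ← Submodule.toAddSubgroup_inj, Submodule.bot_toAddSubgroup]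

theorem IsNilpotentLieRing.isNilpotent (h : IsNilpotentLieRing L) : LieRing.IsNilpotent L := by
  obtain ⟨c, hc⟩ := h
  exact LieModule.IsNilpotent.mk (R := ℤ) _ (lieLCS_eq_bot_iff.1 hc)

end LieRing

theorem isLeast_pow_smul_eq_zero_of_exponent_eq_pow {A : Type*} [AddGroup A] {p e : ℕ}
    (hp : 1 < p) (h : AddMonoid.exponent A = p ^ e) :
    IsLeast {k : ℕ | ∀ x : A, (p : ℤ) ^ k • x = 0} e := by
  have hmem (k : ℕ) : (∀ x : A, (p : ℤ) ^ k • x = 0) ↔ e ≤ k := by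
    rw [← Nat.pow_dvd_pow_iff_le_right hp, ← h, AddMonoid.exponent_dvd_iff_forall_nsmul_eq_zero]
    simp [← natCast_zsmul]
  simp only [hmem]
  exact isLeast_Ici

/-- Let `L` be a nilpotent Lie ring of order `p ^ n` with additive
coexponent `f` (i.e. the additive exponent is `p ^ e` with `n - e = f`).  Then the
nilpotency class of `L` is at most `f + 1`. -/
theorem lie_coexponent_class_bound (p n f : ℕ) (hp : p.Prime)
    (L : Type) [LieRing L] [Finite L]
    (hcard : Nat.card L = p ^ n)
    (hcoexp : ∃ e : ℕ, AddMonoid.exponent L = p ^ e ∧ n - e = f)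
    (hnil : IsNilpotentLieRing L) :
    lieLCS L (f + 1) = ⊥ := by
  obtain ⟨e, hexp, rfl⟩ := hcoexp
  have := hnil.isNilpotent
  exact lieLCS_eq_bot_iff.2 <| lie_coexponent_class_bound_general
    (length_le_of_card_eq_prime_pow hp hcard)
    (isLeast_pow_smul_eq_zero_of_exponent_eq_pow hp.one_lt hexp)
end
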